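/- arXiv:1701.00787 — 2 statements merged into one kernel-verified Lean document; each statement's English description precedes it below -/
import Mathlib

section
/- Let d ∈ ℕ with d ≥ 3, let t ∈ (0, π], and let δ be a real number with δ ≥ ⌈d/2⌉. Then the function θ ↦ (t - θ)_+^δ (equal to (t-θ)^δ for 0 ≤ θ ≤ t and to 0 for t < θ ≤ π) is strictly positive definite on the unit sphere S^{d-1}. -/
open MeasureTheory Real Set
open scoped RealInnerProductSpace

/-- A continuous function `g : [0,π] → ℝ` is positive definite on the unit sphere
`S^{d-1} ⊂ ℝ^d` if for every `N` and every family of `N` distinct points on the sphere,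
the matrix `[g(arccos ⟨x_i, x_j⟩)]` is positive semidefinite. -/
def PosDefOnSphere (d : ℕ) (g : ℝ → ℝ) : Prop :=
  ∀ (N : ℕ) (x : Fin N → EuclideanSpace ℝ (Fin d)),
    (∀ i, ‖x i‖ = 1) → Function.Injective x →
    (Matrix.of fun i j : Fin N => g (Real.arccos ⟪x i, x j⟫)).PosSemidef

/-- A continuous function `g : [0,π] → ℝ` is strictly positive definite on the unit sphere
`S^{d-1} ⊂ ℝ^d` if for every `N` and every family of `N` distinct points on the sphere,
the matrix `[g(arccos ⟨x_i, x_j⟩)]` is positive definite. -/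
def StrictPosDefOnSphere (d : ℕ) (g : ℝ → ℝ) : Prop :=
  ∀ (N : ℕ) (x : Fin N → EuclideanSpace ℝ (Fin d)),
    (∀ i, ‖x i‖ = 1) → Function.Injective x →
    (Matrix.of fun i j : Fin N => g (Real.arccos ⟪x i, x j⟫)).PosDef

open Filter Topology Module
open scoped ContDiff

/-!
Work in even dimension `2n + 2`, into which the sphere embeds. For unit vectors `x i` at mutual
angles `θ i j` and coefficients `c i`, the sum `∑ i j, c i c j vol(C i ∩ C j ∩ K)` over the caps
`C i = {z | 1 < ⟪x i, z⟫}` is the integral over `K` of a square, so it increases with `K`.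
For `K` the ball of radius `√(1 + B)`, integrating over planes in polar coordinates shows
that it is a positive multiple of the `(n + 1)`-fold primitive at `B` of
`Ω u = ∑ i j, c i c j (2 arctan √u - θ i j)₊`. Hence the `n`-fold primitive of `Ω` is nonnegative;
moreover `Ω` itself is positive near `0`, where only the diagonal terms survive.

With `m = n - 1` and `α u = 2 arctan √u`, the weight `(α U - α u) ^ m * α' u` is completely
monotone in `u` on `(0, U]` and vanishes to order `m` at `U`. Integrating by parts `m + 1` times,
its integral against `Ω` is therefore positive, with a bound uniform for `U` away from `0`. The
substitution `s = α u` turns this integral into a positive multiple of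
`∑ i j, c i c j (α U - θ i j)₊ ^ (m + 2)`. This gives the exponent `m + 2` for all `t = α U < π`,
and for `t = π` by letting `U → ∞`; a beta integral in `t` yields all larger exponents.
-/

/-- The primitive of `w` that vanishes at `0`; its iterates are the repeated integrals of `w`. -/
noncomputable def primitive (w : ℝ → ℝ) (v : ℝ) : ℝ := ∫ u in (0 : ℝ)..v, w u

/-- The pairing `∑ j ≤ n, (-1)^j f^{(j)}(v) (I^{j+1} w)(v)` of derivatives of `f` with iterated
primitives of `w`: the boundary terms of `n + 1` integrations by parts in `∫ u in 0..v, f u * w u`.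
It only involves `f` near `v`, so `f` may be singular at `0`. -/
noncomputable def taylorPairing (f w : ℝ → ℝ) (n : ℕ) (v : ℝ) : ℝ :=
  ∑ j ∈ Finset.range (n + 1), (-1) ^ j * iteratedDeriv j f v * primitive^[j + 1] w v

section Primitive

variable {w : ℝ → ℝ}

lemma hasDerivAt_primitive (hw : Continuous w) (v : ℝ) : HasDerivAt (primitive w) (w v) v :=
  (hw.integral_hasStrictDerivAt 0 v).hasDerivAt

lemma continuous_iterate_primitive (hw : Continuous w) (n : ℕ) :
    Continuous (primitive^[n] w) := by
  induction n generalizing w with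
  | zero => exact hw
  | succ _ ih =>
    exact ih (continuous_iff_continuousAt.2 fun v => (hasDerivAt_primitive hw v).continuousAt)

lemma hasDerivAt_iterate_primitive (hw : Continuous w) (n : ℕ) (v : ℝ) :
    HasDerivAt (primitive^[n + 1] w) (primitive^[n] w v) v := by
  rw [Function.iterate_succ_apply']
  exact hasDerivAt_primitive (continuous_iterate_primitive hw n) v

lemma iterate_succ_primitive_zero (w : ℝ → ℝ) (n : ℕ) : primitive^[n + 1] w 0 = 0 := by
  rw [Function.iterate_succ_apply', primitive, intervalIntegral.integral_same]

lemma iterate_primitive_pos (hw : Continuous w) {a : ℝ} (hpos : ∀ u ∈ Ioc 0 a, 0 < w u) (n : ℕ) :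
    ∀ u ∈ Ioc 0 a, 0 < primitive^[n] w u := by
  induction n with
  | zero => exact hpos
  | succ n ih =>
    intro u hu
    rw [Function.iterate_succ_apply']
    exact intervalIntegral.intervalIntegral_pos_of_pos_on
      ((continuous_iterate_primitive hw n).intervalIntegrable 0 u)
      (fun v hv => ih v ⟨hv.1, hv.2.le.trans hu.2⟩) hu.1

lemma iterate_primitive_nonneg_of_monotoneOn (hw : Continuous w) (n : ℕ)
    (hmono : MonotoneOn (primitive^[n + 1] w) (Ici 0)) :
    ∀ u ∈ Ici (0 : ℝ), 0 ≤ primitive^[n] w u := by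
  intro u hu
  rw [← (hasDerivAt_iterate_primitive hw n u).hasDerivWithinAt.derivWithin
    (uniqueDiffOn_Ici 0 u hu)]
  exact hmono.derivWithin_nonneg

lemma integral_sub_pow_mul_eq_iterate_primitive (hw : Continuous w) (n : ℕ) (v : ℝ) :
    ∫ u in (0 : ℝ)..v, (v - u) ^ n * w u = n.factorial * primitive^[n + 1] w v := by
  induction n generalizing w with
  | zero => simp [primitive]
  | succ n ih =>
    have hderiv (u : ℝ) : HasDerivAt (fun u => (v - u) ^ (n + 1)) (-((n + 1) * (v - u) ^ n)) u := by
      simpa using ((hasDerivAt_id' u).const_sub v).fun_pow (n + 1)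
    have hw' : Continuous (primitive w) := continuous_iterate_primitive hw 1
    have hparts := intervalIntegral.integral_mul_deriv_eq_deriv_mul (a := 0) (b := v)
      (fun u _ => hderiv u) (fun u _ => hasDerivAt_primitive hw u)
      (Continuous.intervalIntegrable (by fun_prop) _ _) (hw.intervalIntegrable _ _)
    have hzero : primitive w 0 = 0 := iterate_succ_primitive_zero w 0
    simp only [hzero, sub_self, ne_eq, Nat.add_eq_zero_iff, one_ne_zero, and_false,
      not_false_eq_true, zero_pow, zero_mul, mul_zero, zero_sub, neg_mul, mul_assoc,
      intervalIntegral.integral_neg, neg_neg, intervalIntegral.integral_const_mul, ih hw',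
      ← Function.iterate_succ_apply] at hparts
    rw [hparts, Nat.factorial_succ]
    push_cast
    ring

end Primitive

section IntegralInequality

variable {f w : ℝ → ℝ} {n : ℕ}

lemma hasDerivAt_taylorPairing (hw : Continuous w) {v : ℝ} (hf : ContDiffAt ℝ (n + 1) f v) :
    HasDerivAt (taylorPairing f w n)
      (f v * w v - (-1) ^ (n + 1) * iteratedDeriv (n + 1) f v * primitive^[n + 1] w v) v := by
  have hterm (j : ℕ) (hj : j < n + 1) :
      HasDerivAt (fun v => (-1) ^ j * iteratedDeriv j f v * primitive^[j + 1] w v)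
        ((-1) ^ j * iteratedDeriv j f v * primitive^[j] w v -
          (-1) ^ (j + 1) * iteratedDeriv (j + 1) f v * primitive^[j + 1] w v) v := by
    have hdiff : DifferentiableAt ℝ (iteratedDeriv j f) v := by
      rw [iteratedDeriv_eq_equiv_comp, LinearIsometryEquiv.comp_differentiableAt_iff]
      exact hf.differentiableAt_iteratedFDeriv (by exact_mod_cast hj)
    have := (hdiff.hasDerivAt.const_mul ((-1) ^ j)).mul (hasDerivAt_iterate_primitive hw j v)
    refine this.congr_deriv ?_
    rw [iteratedDeriv_succ]
    ring
  have hsum := HasDerivAt.fun_sum fun j (hj : j ∈ Finset.range (n + 1)) =>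
    hterm j (Finset.mem_range.1 hj)
  rw [Finset.sum_range_sub'] at hsum
  simp only [pow_zero, one_mul, iteratedDeriv_zero, Function.iterate_zero, id] at hsum
  exact hsum

lemma taylorPairing_eq_integral (hw : Continuous w) (f : ℝ → ℝ) (n : ℕ) (v : ℝ) :
    taylorPairing f w n v = ∫ u in (0 : ℝ)..v,
      (∑ j ∈ Finset.range (n + 1), iteratedDeriv j f v * (u - v) ^ j / j.factorial) * w u := by
  simp only [Finset.sum_mul]
  rw [intervalIntegral.integral_finsetSum
    fun j _ => Continuous.intervalIntegrable (by fun_prop) _ _]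
  refine Finset.sum_congr rfl fun j _ => ?_
  have hcauchy := integral_sub_pow_mul_eq_iterate_primitive hw j v
  have hne : (j.factorial : ℝ) ≠ 0 := by positivity
  calc (-1) ^ j * iteratedDeriv j f v * primitive^[j + 1] w v
      = (-1) ^ j * iteratedDeriv j f v / j.factorial * ∫ u in (0 : ℝ)..v, (v - u) ^ j * w u := by
        rw [hcauchy]
        field_simp
    _ = ∫ u in (0 : ℝ)..v, iteratedDeriv j f v * (u - v) ^ j / j.factorial * w u := by
        rw [← intervalIntegral.integral_const_mul]
        congr 1 with u
        rw [← neg_sub v u, neg_pow (v - u)]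
        ring

lemma pow_div_factorial_le_taylor_remainder {η u a : ℝ} (hu : u < a)
    (hf : ∀ v ∈ Icc u a, ContDiffAt ℝ (n + 1) f v)
    (hη : ∀ v ∈ Ioo u a, η ≤ (-1) ^ (n + 1) * iteratedDeriv (n + 1) f v) :
    η * (a - u) ^ (n + 1) / (n + 1).factorial ≤
      f u - ∑ j ∈ Finset.range (n + 1), iteratedDeriv j f a * (u - a) ^ j / j.factorial := by
  have hIcc : uIcc a u = Icc u a := uIcc_of_ge hu.le
  obtain ⟨ξ, hξ, hrem⟩ := taylor_mean_remainder_lagrange_iteratedDeriv (n := n) hu.ne'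
    (fun v hv => (hf v (hIcc ▸ hv)).contDiffWithinAt)
  rw [uIoo_of_ge hu.le] at hξ
  have htaylor : taylorWithinEval f n (uIcc a u) a u =
      ∑ j ∈ Finset.range (n + 1), iteratedDeriv j f a * (u - a) ^ j / j.factorial := by
    rw [taylor_within_apply]
    refine Finset.sum_congr rfl fun j hj => ?_
    rw [iteratedDerivWithin_eq_iteratedDeriv (uniqueDiffOn_uIcc hu.ne')
      ((hf a (right_mem_Icc.2 hu.le)).of_le
        (by exact_mod_cast (Finset.mem_range.1 hj).le)) left_mem_uIcc, smul_eq_mul]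
    ring
  rw [← htaylor, hrem, ← neg_sub a u, neg_pow (a - u), ← mul_assoc, mul_comm (iteratedDeriv _ _ _)]
  have := sub_nonneg.2 hu.le
  have := hη ξ hξ
  gcongr

lemma mul_iterate_primitive_le_integral_sub_taylorPairing (hw : Continuous w) {η a : ℝ}
    (ha : 0 ≤ a) (hfint : IntervalIntegrable f volume 0 a)
    (hf : ∀ v ∈ Ioc 0 a, ContDiffAt ℝ (n + 1) f v)
    (hη : ∀ v ∈ Ioc 0 a, η ≤ (-1) ^ (n + 1) * iteratedDeriv (n + 1) f v)
    (hwnonneg : ∀ u ∈ Ioc 0 a, 0 ≤ w u) :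
    η * primitive^[n + 2] w a ≤ (∫ u in (0 : ℝ)..a, f u * w u) - taylorPairing f w n a := by
  have hfact : ((n + 1).factorial : ℝ) ≠ 0 := by positivity
  have hleft : η * primitive^[n + 2] w a =
      ∫ u in (0 : ℝ)..a, η * (a - u) ^ (n + 1) / (n + 1).factorial * w u := by
    have hcauchy := integral_sub_pow_mul_eq_iterate_primitive hw (n + 1) a
    rw [← mul_div_cancel_left₀ (primitive^[n + 2] w a) hfact, ← hcauchy, ← mul_div_assoc,
      mul_div_right_comm, ← intervalIntegral.integral_const_mul]
    congr 1 with u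
    ring
  rw [hleft, taylorPairing_eq_integral hw, ← intervalIntegral.integral_sub
    (hfint.mul_continuousOn hw.continuousOn) (Continuous.intervalIntegrable (by fun_prop) _ _)]
  refine intervalIntegral.integral_mono_on_of_le_Ioo ha
    (Continuous.intervalIntegrable (by fun_prop) _ _)
    ((hfint.mul_continuousOn hw.continuousOn).sub
      (Continuous.intervalIntegrable (by fun_prop) _ _)) fun u hu => ?_
  rw [← sub_mul]
  exact mul_le_mul_of_nonneg_right (pow_div_factorial_le_taylor_remainder hu.2
    (fun v hv => hf v ⟨hu.1.trans_le hv.1, hv.2⟩)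
    (fun v hv => hη v ⟨hu.1.trans hv.1, hv.2.le⟩)) (hwnonneg u ⟨hu.1, hu.2.le⟩)

lemma integral_sub_taylorPairing_monotoneOn (hw : Continuous w) {U : ℝ}
    (hfint : IntervalIntegrable f volume 0 U)
    (hf : ∀ v ∈ Ioc 0 U, ContDiffAt ℝ (n + 1) f v)
    (hsign : ∀ v ∈ Ioc 0 U, 0 ≤ (-1) ^ (n + 1) * iteratedDeriv (n + 1) f v)
    (hwnonneg : ∀ u ∈ Ioc 0 U, 0 ≤ primitive^[n + 1] w u) :
    MonotoneOn (fun v => (∫ u in (0 : ℝ)..v, f u * w u) - taylorPairing f w n v) (Ioc 0 U) := by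
  have hderiv (v : ℝ) (hv : v ∈ Ioc 0 U) : HasDerivWithinAt
      (fun v => (∫ u in (0 : ℝ)..v, f u * w u) - taylorPairing f w n v)
      ((-1) ^ (n + 1) * iteratedDeriv (n + 1) f v * primitive^[n + 1] w v) (Ioc 0 U) v := by
    have hint : IntervalIntegrable (fun u => f u * w u) volume 0 v :=
      (hfint.mul_continuousOn hw.continuousOn).mono_set
        (uIcc_subset_uIcc_left (by simp [uIcc_of_le (hv.1.le.trans hv.2), hv.1.le, hv.2]))
    have hfv := hf v hv
    obtain ⟨s, hs, hsopen, hvs⟩ := eventually_nhds_iff.1 (hfv.eventually (by simp))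
    have := intervalIntegral.integral_hasDerivAt_right hint
      (ContinuousAt.stronglyMeasurableAtFilter hsopen
        (fun u hu => (hs u hu).continuousAt.mul hw.continuousAt) v hvs)
      (hfv.continuousAt.mul hw.continuousAt)
    refine ((this.sub (hasDerivAt_taylorPairing hw hfv)).congr_deriv ?_).hasDerivWithinAt
    ring
  refine monotoneOn_of_hasDerivWithinAt_nonneg (convex_Ioc 0 U)
    (fun v hv => (hderiv v hv).continuousWithinAt)
    (fun v hv => (hderiv v (interior_subset hv)).mono interior_subset)
    fun v hv => ?_
  exact mul_nonneg (hsign v (interior_subset hv)) (hwnonneg v (interior_subset hv))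

lemma mul_iterate_primitive_le_integral_mul (hw : Continuous w) {η a U : ℝ}
    (ha : 0 < a) (haU : a ≤ U) (hfint : IntervalIntegrable f volume 0 U)
    (hf : ∀ v ∈ Ioc 0 U, ContDiffAt ℝ (n + 1) f v)
    (hη : ∀ v ∈ Ioc 0 a, η ≤ (-1) ^ (n + 1) * iteratedDeriv (n + 1) f v)
    (hsign : ∀ v ∈ Ioc 0 U, 0 ≤ (-1) ^ (n + 1) * iteratedDeriv (n + 1) f v)
    (hend : 0 ≤ (-1) ^ n * iteratedDeriv n f U) (hzero : ∀ j < n, iteratedDeriv j f U = 0)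
    (hwnonneg : ∀ u ∈ Ioc 0 a, 0 ≤ w u)
    (hprim : ∀ u ∈ Ioc 0 U, 0 ≤ primitive^[n + 1] w u) :
    η * primitive^[n + 2] w a ≤ ∫ u in (0 : ℝ)..U, f u * w u := by
  have hU : U ∈ Ioc 0 U := ⟨ha.trans_le haU, le_rfl⟩
  have hpairing : 0 ≤ taylorPairing f w n U := by
    rw [taylorPairing, Finset.sum_range_succ, Finset.sum_eq_zero, zero_add]
    · exact mul_nonneg hend (hprim U hU)
    · intro j hj
      rw [hzero j (Finset.mem_range.1 hj), mul_zero, zero_mul]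
  have hfint_a : IntervalIntegrable f volume 0 a :=
    hfint.mono_set (uIcc_subset_uIcc_left (by simp [uIcc_of_le hU.1.le, ha.le, haU]))
  calc η * primitive^[n + 2] w a
      ≤ (∫ u in (0 : ℝ)..a, f u * w u) - taylorPairing f w n a :=
        mul_iterate_primitive_le_integral_sub_taylorPairing hw ha.le hfint_a
          (fun v hv => hf v ⟨hv.1, hv.2.trans haU⟩) hη hwnonneg
    _ ≤ (∫ u in (0 : ℝ)..U, f u * w u) - taylorPairing f w n U :=
        integral_sub_taylorPairing_monotoneOn hw hfint hf hsign hprim ⟨ha, haU⟩ hU haU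
    _ ≤ ∫ u in (0 : ℝ)..U, f u * w u := sub_le_self _ hpairing

end IntegralInequality

/-- `f` is completely monotone at the point `x`: it is smooth there and its derivatives at `x`
alternate in sign. The classical notion on an interval is this property at each of its points. -/
structure CompletelyMonotoneAt (f : ℝ → ℝ) (x : ℝ) : Prop where
  contDiffAt : ContDiffAt ℝ ∞ f x
  neg_one_pow_mul_nonneg : ∀ n : ℕ, 0 ≤ (-1) ^ n * iteratedDeriv n f x

section CompleteMonotonicity

variable {f g : ℝ → ℝ} {x : ℝ}

lemma neg_one_pow_mul_iteratedDeriv_mul {n : ℕ} (hf : ContDiffAt ℝ n f x)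
    (hg : ContDiffAt ℝ n g x) :
    (-1) ^ n * iteratedDeriv n (f * g) x = ∑ i ∈ Finset.range (n + 1), n.choose i *
      ((-1) ^ i * iteratedDeriv i f x) * ((-1) ^ (n - i) * iteratedDeriv (n - i) g x) := by
  rw [iteratedDeriv_mul hf hg, Finset.mul_sum]
  refine Finset.sum_congr rfl fun i hi => ?_
  rw [← pow_mul_pow_sub (-1 : ℝ) (Nat.lt_succ_iff.1 (Finset.mem_range.1 hi))]
  ring

namespace CompletelyMonotoneAt

lemma nonneg (hf : CompletelyMonotoneAt f x) : 0 ≤ f x := by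
  simpa using hf.neg_one_pow_mul_nonneg 0

lemma apply_mul_le_neg_one_pow_mul_iteratedDeriv_mul (hf : CompletelyMonotoneAt f x)
    (hg : CompletelyMonotoneAt g x) (n : ℕ) :
    (-1) ^ n * iteratedDeriv n f x * g x ≤ (-1) ^ n * iteratedDeriv n (f * g) x := by
  rw [neg_one_pow_mul_iteratedDeriv_mul (hf.contDiffAt.of_le (by exact_mod_cast le_top))
    (hg.contDiffAt.of_le (by exact_mod_cast le_top))]
  have hterm (i : ℕ) : 0 ≤ n.choose i * ((-1) ^ i * iteratedDeriv i f x) *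
      ((-1) ^ (n - i) * iteratedDeriv (n - i) g x) :=
    mul_nonneg (mul_nonneg (Nat.cast_nonneg _) (hf.neg_one_pow_mul_nonneg i))
      (hg.neg_one_pow_mul_nonneg (n - i))
  simpa using Finset.single_le_sum (fun i _ => hterm i) (Finset.self_mem_range_succ n)

lemma mul (hf : CompletelyMonotoneAt f x) (hg : CompletelyMonotoneAt g x) :
    CompletelyMonotoneAt (f * g) x :=
  ⟨hf.contDiffAt.mul hg.contDiffAt, fun n =>
    (mul_nonneg (hf.neg_one_pow_mul_nonneg n) hg.nonneg).trans
      (hf.apply_mul_le_neg_one_pow_mul_iteratedDeriv_mul hg n)⟩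

lemma one (x : ℝ) : CompletelyMonotoneAt 1 x := by
  refine ⟨contDiffAt_const, fun n => ?_⟩
  cases n <;> simp [Pi.one_def, iteratedDeriv_const]

lemma pow (hf : CompletelyMonotoneAt f x) (m : ℕ) : CompletelyMonotoneAt (f ^ m) x := by
  induction m with
  | zero => simpa only [pow_zero] using one x
  | succ m ih => simpa only [pow_succ] using ih.mul hf

lemma comp_add_const {a : ℝ} (hf : CompletelyMonotoneAt f (x + a)) :
    CompletelyMonotoneAt (fun y => f (y + a)) x := by
  refine ⟨hf.contDiffAt.comp x (by fun_prop), fun n => ?_⟩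
  rw [iteratedDeriv_comp_add_const]
  exact hf.neg_one_pow_mul_nonneg n

lemma of_neg_deriv (hf : ContDiffAt ℝ ∞ f x) (hfx : 0 ≤ f x) (hg : CompletelyMonotoneAt g x)
    (hderiv : deriv f =ᶠ[𝓝 x] -g) : CompletelyMonotoneAt f x := by
  refine ⟨hf, fun n => ?_⟩
  cases n with
  | zero => simpa using hfx
  | succ n =>
    rw [iteratedDeriv_succ', (hderiv.iteratedDeriv n).eq_of_nhds, iteratedDeriv_neg, pow_succ]
    simpa using hg.neg_one_pow_mul_nonneg n

end CompletelyMonotoneAt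

lemma neg_one_pow_mul_iteratedDeriv_rpow (p x : ℝ) (n : ℕ) :
    (-1) ^ n * iteratedDeriv n (fun y => y ^ (-p)) x =
      (ascPochhammer ℝ n).eval p * x ^ (-p - n) := by
  rw [iteratedDeriv_eq_iterate, Real.iter_deriv_rpow_const, ← mul_assoc,
    ← ascPochhammer_eval_neg_eq_descPochhammer, neg_neg]

lemma completelyMonotoneAt_rpow_neg {p : ℝ} (hp : 0 < p) (hx : 0 < x) :
    CompletelyMonotoneAt (fun y => y ^ (-p)) x := by
  refine ⟨Real.contDiffAt_rpow_const_of_ne hx.ne', fun n => ?_⟩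
  rw [neg_one_pow_mul_iteratedDeriv_rpow]
  exact mul_nonneg (ascPochhammer_pos n p hp).le (Real.rpow_nonneg hx.le _)

lemma iteratedDeriv_pow_mul_eq_zero {𝕜 : Type*} [NontriviallyNormedField 𝕜] [CharZero 𝕜]
    [CompleteSpace 𝕜] {f g : 𝕜 → 𝕜} {x : 𝕜} (hf : AnalyticAt 𝕜 f x) (hg : AnalyticAt 𝕜 g x)
    (hfx : f x = 0) {j m : ℕ} (hj : j < m) : iteratedDeriv j (f ^ m * g) x = 0 := by
  refine (natCast_le_analyticOrderAt_iff_iteratedDeriv_eq_zero ((hf.pow m).mul hg)).1 ?_ j hj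
  have hone : 1 ≤ analyticOrderAt f x :=
    Order.one_le_iff_ne_zero.2 (hf.analyticOrderAt_ne_zero.2 hfx)
  calc (m : ℕ∞) = m • 1 := by simp
    _ ≤ m • analyticOrderAt f x := nsmul_le_nsmul_right hone m
    _ ≤ analyticOrderAt (f ^ m * g) x := by
      rw [analyticOrderAt_mul (hf.pow m) hg, analyticOrderAt_pow hf]
      exact le_self_add

end CompleteMonotonicity

/-- The angular diameter of the cap `{z | 1 < ⟪x, z⟫}` cut out by a unit vector `x` from the sphere
`‖z‖ ^ 2 = 1 + u`. For `u ≤ 0` the cap is empty and the value is `0`. -/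
noncomputable def capAngle (u : ℝ) : ℝ := 2 * arctan √u

section CapAngle

@[fun_prop]
lemma continuous_capAngle : Continuous capAngle := by
  unfold capAngle
  fun_prop

lemma capAngle_of_nonpos {u : ℝ} (hu : u ≤ 0) : capAngle u = 0 := by
  simp [capAngle, sqrt_eq_zero_of_nonpos hu]

lemma strictMonoOn_capAngle : StrictMonoOn capAngle (Ici 0) := fun _ hu _ _ huv =>
  mul_lt_mul_of_pos_left (arctan_lt_arctan_iff.2 (sqrt_lt_sqrt hu huv)) two_pos

lemma capAngle_pos {u : ℝ} (hu : 0 < u) : 0 < capAngle u := by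
  simpa only [capAngle_of_nonpos le_rfl] using strictMonoOn_capAngle self_mem_Ici hu.le hu

lemma capAngle_nonneg (u : ℝ) : 0 ≤ capAngle u :=
  mul_nonneg two_pos.le (arctan_nonneg.2 (sqrt_nonneg u))

lemma capAngle_div_two_lt (u : ℝ) : capAngle u / 2 < π / 2 := by
  rw [capAngle, mul_div_cancel_left₀ _ two_ne_zero]
  exact arctan_lt_pi_div_two _

lemma capAngle_tan_sq {t : ℝ} (ht₀ : 0 ≤ t) (htπ : t < π) : capAngle (tan (t / 2) ^ 2) = t := by
  rw [capAngle, sqrt_sq (tan_nonneg_of_nonneg_of_le_pi_div_two (by linarith) (by linarith)),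
    arctan_tan (by linarith) (by linarith)]
  ring

lemma tendsto_capAngle_atTop : Tendsto capAngle atTop (𝓝 π) := by
  have := ((tendsto_nhds_of_tendsto_nhdsWithin tendsto_arctan_atTop).comp
    tendsto_sqrt_atTop).const_mul 2
  rwa [mul_div_cancel₀ π two_ne_zero] at this

lemma one_lt_mul_cos_iff {ρ β : ℝ} (hρ : 0 < ρ) (hβ : |β| ≤ π + π / 2) :
    1 < ρ * cos β ↔ |β| < capAngle (ρ ^ 2 - 1) / 2 := by
  rw [← cos_abs β]
  rcases lt_or_ge |β| (π / 2) with hlt | hge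
  · have hpi := pi_pos
    have hcos : 0 < cos |β| := cos_pos_of_mem_Ioo ⟨by linarith [abs_nonneg β], hlt⟩
    have htan : 0 ≤ tan |β| := tan_nonneg_of_nonneg_of_le_pi_div_two (abs_nonneg β) hlt.le
    calc 1 < ρ * cos |β| ↔ 1 < (ρ * cos |β|) ^ 2 :=
          (one_lt_sq_iff₀ (mul_pos hρ hcos).le).symm
      _ ↔ tan |β| ^ 2 < ρ ^ 2 - 1 := by
          rw [mul_pow, ← inv_one_add_tan_sq hcos.ne', ← div_eq_mul_inv,
            one_lt_div (by positivity), lt_sub_iff_add_lt']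
      _ ↔ |β| < capAngle (ρ ^ 2 - 1) / 2 := by
          rw [← lt_sqrt htan, ← arctan_lt_arctan_iff,
            arctan_tan (by linarith [abs_nonneg β]) hlt, capAngle,
            mul_div_cancel_left₀ _ two_ne_zero]
  · have hcos : cos |β| ≤ 0 := cos_nonpos_of_pi_div_two_le_of_le hge hβ
    exact iff_of_false (not_lt.2 ((mul_nonpos_of_nonneg_of_nonpos hρ.le hcos).trans zero_le_one))
      (not_lt.2 ((capAngle_div_two_lt _).le.trans hge))

lemma volume_one_lt_mul_cos {ρ θ : ℝ} (hρ : 0 < ρ) (hθ : θ ∈ Icc 0 π) :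
    volume {α | α ∈ Ioo (-π) π ∧ 1 < ρ * cos α ∧ 1 < ρ * cos (α - θ)} =
      ENNReal.ofReal (capAngle (ρ ^ 2 - 1) - θ) := by
  set r := capAngle (ρ ^ 2 - 1) / 2 with hr
  have hrpi : r < π / 2 := capAngle_div_two_lt _
  have hset : {α | α ∈ Ioo (-π) π ∧ 1 < ρ * cos α ∧ 1 < ρ * cos (α - θ)} = Ioo (θ - r) r := by
    ext α
    simp only [mem_ofPred_eq, mem_Ioo]
    constructor
    · rintro ⟨hα, hcos, hcos'⟩
      rw [one_lt_mul_cos_iff hρ (abs_le.2 ⟨by linarith, by linarith⟩), abs_lt] at hcos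
      rw [one_lt_mul_cos_iff hρ (abs_le.2 ⟨by linarith [hθ.2], by linarith [hθ.1]⟩),
        abs_lt] at hcos'
      exact ⟨by linarith, hcos.2⟩
    · rintro ⟨hα₁, hα₂⟩
      have hα : |α| < r := abs_lt.2 ⟨by linarith [hθ.1], hα₂⟩
      have hα' : |α - θ| < r := abs_lt.2 ⟨by linarith, by linarith [hθ.1]⟩
      have := abs_lt.1 hα
      exact ⟨⟨by linarith, by linarith⟩, (one_lt_mul_cos_iff hρ (by linarith)).2 hα,
        (one_lt_mul_cos_iff hρ (by linarith)).2 hα'⟩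
  rw [hset, volume_Ioo, hr]
  congr 1
  ring

end CapAngle

section Wedge

variable {E : Type*} [NormedAddCommGroup E] [InnerProductSpace ℝ E]

lemma exists_norm_eq_one_smul_eq (V : Type*) [NormedAddCommGroup V] [NormedSpace ℝ V]
    [Nontrivial V] (v : V) : ∃ e : V, ‖e‖ = 1 ∧ ‖v‖ • e = v := by
  rcases eq_or_ne v 0 with rfl | hv
  · obtain ⟨e, he⟩ := exists_norm_eq V zero_le_one
    exact ⟨e, he, by simp⟩
  · exact ⟨‖v‖⁻¹ • v, norm_smul_inv_norm (𝕜 := ℝ) hv, smul_inv_smul₀ (norm_ne_zero_iff.2 hv) v⟩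

lemma exists_eq_cos_smul_add_sin_smul [FiniteDimensional ℝ E] (hE : 2 ≤ finrank ℝ E) {x y : E}
    (hx : ‖x‖ = 1) (hy : ‖y‖ = 1) : ∃ e : E, ‖e‖ = 1 ∧ ⟪x, e⟫ = 0 ∧
      y = cos (arccos ⟪x, y⟫) • x + sin (arccos ⟪x, y⟫) • e := by
  have hxx : ⟪x, x⟫ = 1 := by rw [real_inner_self_eq_norm_sq, hx, one_pow]
  have horth : y - ⟪x, y⟫ • x ∈ (ℝ ∙ x)ᗮ := by
    rw [Submodule.mem_orthogonal_singleton_iff_inner_right, inner_sub_right, inner_smul_right, hxx,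
      mul_one, sub_self]
  have : Nontrivial (ℝ ∙ x)ᗮ := by
    have hsum := (ℝ ∙ x).finrank_add_finrank_orthogonal
    have hone := finrank_span_singleton (K := ℝ) (norm_ne_zero_iff.1 (hx ▸ one_ne_zero))
    exact nontrivial_of_finrank_pos (R := ℝ) (by omega)
  obtain ⟨e, he, hve⟩ := exists_norm_eq_one_smul_eq (ℝ ∙ x)ᗮ ⟨_, horth⟩
  have hnorm : ‖y - ⟪x, y⟫ • x‖ = sin (arccos ⟪x, y⟫) := by
    rw [sin_arccos, ← sqrt_sq (norm_nonneg _), @norm_sub_sq_real, inner_smul_right, norm_smul,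
      real_inner_comm, hx, hy, mul_one, norm_eq_abs, sq_abs]
    congr 1
    ring
  have habs := abs_le.1 (abs_real_inner_le_norm x y)
  rw [hx, hy, one_mul] at habs
  refine ⟨e, he, Submodule.mem_orthogonal_singleton_iff_inner_right.1 e.2, ?_⟩
  rw [cos_arccos habs.1 habs.2, ← hnorm, ← sub_eq_iff_eq_add']
  exact (congrArg Subtype.val hve).symm

lemma exists_orthonormalBasis_sum_extension [FiniteDimensional ℝ E] {ι : Type*} [Fintype ι] {k : ℕ}
    (hE : finrank ℝ E = Fintype.card ι + k) {v : ι → E} (hv : Orthonormal ℝ v) :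
    ∃ b : OrthonormalBasis (ι ⊕ Fin k) ℝ E, ∀ i, b (Sum.inl i) = v i := by
  have hrange : Orthonormal ℝ ((range Sum.inl).domRestrict (Sum.elim v 0 : ι ⊕ Fin k → E)) := by
    constructor
    · rintro ⟨_, i, rfl⟩
      exact hv.1 i
    · rintro ⟨_, i, rfl⟩ ⟨_, j, rfl⟩ hij
      exact hv.2 (ne_of_apply_ne (rangeFactorization Sum.inl) hij)
  obtain ⟨b, hb⟩ := hrange.exists_orthonormalBasis_extension_of_card_eq (by simp [hE])
  exact ⟨b, fun i => hb (Sum.inl i) (mem_range_self i)⟩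

end Wedge

section WedgeVolume

variable {E : Type*} [NormedAddCommGroup E] [InnerProductSpace ℝ E] [FiniteDimensional ℝ E]
  [MeasurableSpace E] [BorelSpace E]

lemma measurePreserving_inner_pair {k : ℕ} (b : OrthonormalBasis (Fin 2 ⊕ Fin k) ℝ E) :
    MeasurePreserving fun z => ((⟪b (Sum.inl 0), z⟫, ⟪b (Sum.inl 1), z⟫),
      (WithLp.toLp 2 fun i => ⟪b (Sum.inr i), z⟫ : EuclideanSpace ℝ (Fin k))) := by
  have hsplit := (volume_preserving_finTwoArrow ℝ).prod (PiLp.volume_preserving_toLp (Fin k))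
  have hcoord := (volume_measurePreserving_sumPiEquivProdPi fun _ : Fin 2 ⊕ Fin k => ℝ).comp
    ((PiLp.volume_preserving_ofLp (Fin 2 ⊕ Fin k)).comp b.measurePreserving_repr)
  simp only [← b.repr_apply_apply]
  exact hsplit.comp hcoord

/-- The planar wedge cut out by the unit vectors `(1, 0)` and `(cos θ, sin θ)`. -/
def planarWedge (θ : ℝ) : Set (ℝ × ℝ) := {p | 1 < p.1 ∧ 1 < cos θ * p.1 + sin θ * p.2}

lemma measurableSet_planarWedge (θ : ℝ) : MeasurableSet (planarWedge θ) := by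
  unfold planarWedge
  measurability

lemma volume_caps_inter_ball_eq_lintegral {k : ℕ} (hE : finrank ℝ E = 2 + k) {x y : E}
    (hx : ‖x‖ = 1) (hy : ‖y‖ = 1) (s : ℝ) :
    volume {z | 1 < ⟪x, z⟫ ∧ 1 < ⟪y, z⟫ ∧ ‖z‖ ^ 2 < s} =
      ∫⁻ p in planarWedge (arccos ⟪x, y⟫),
        volume {q : EuclideanSpace ℝ (Fin k) | ‖q‖ ^ 2 < s - (p.1 ^ 2 + p.2 ^ 2)} := by
  obtain ⟨e, he, hxe, hye⟩ := exists_eq_cos_smul_add_sin_smul (by omega) hx hy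
  obtain ⟨b, hb⟩ := exists_orthonormalBasis_sum_extension (ι := Fin 2) (v := ![x, e]) (k := k)
    (by simpa using hE) (by simp [orthonormal_vecCons_iff, hx, he, hxe])
  have hb₀ : b (Sum.inl 0) = x := hb 0
  have hb₁ : b (Sum.inl 1) = e := hb 1
  set θ := arccos ⟪x, y⟫
  set T : Set ((ℝ × ℝ) × EuclideanSpace ℝ (Fin k)) :=
    Prod.fst ⁻¹' planarWedge θ ∩ {w | ‖w.2‖ ^ 2 < s - (w.1.1 ^ 2 + w.1.2 ^ 2)}
  have hT : MeasurableSet T := (measurable_fst (measurableSet_planarWedge θ)).inter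
    (measurableSet_lt (by fun_prop) (by fun_prop))
  have hpreimage : {z | 1 < ⟪x, z⟫ ∧ 1 < ⟪y, z⟫ ∧ ‖z‖ ^ 2 < s} =
      (fun z => ((⟪b (Sum.inl 0), z⟫, ⟪b (Sum.inl 1), z⟫),
        (WithLp.toLp 2 fun i => ⟪b (Sum.inr i), z⟫ : EuclideanSpace ℝ (Fin k)))) ⁻¹' T := by
    ext z
    have hyz : ⟪y, z⟫ = cos θ * ⟪x, z⟫ + sin θ * ⟪e, z⟫ := by
      rw [hye, inner_add_left, real_inner_smul_left, real_inner_smul_left]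
    have hz : ‖z‖ ^ 2 = ⟪x, z⟫ ^ 2 + ⟪e, z⟫ ^ 2 + ∑ i, ⟪b (Sum.inr i), z⟫ ^ 2 := by
      rw [← b.sum_sq_norm_inner_right z, Fintype.sum_sum_type, Fin.sum_univ_two, hb₀, hb₁]
      simp only [norm_eq_abs, sq_abs]
    rw [mem_preimage, mem_ofPred_eq, mem_inter_iff, mem_preimage, mem_ofPred_eq, planarWedge,
      mem_ofPred_eq, hb₀, hb₁, hyz, hz, EuclideanSpace.norm_sq_eq, lt_sub_iff_add_lt', and_assoc]
    simp only [norm_eq_abs, sq_abs]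
  rw [hpreimage, (measurePreserving_inner_pair b).measure_preimage hT.nullMeasurableSet,
    Measure.volume_eq_prod, Measure.prod_apply hT,
    ← lintegral_indicator (measurableSet_planarWedge θ)]
  refine lintegral_congr fun p => ?_
  have hfst : Prod.mk p ⁻¹' (Prod.fst ⁻¹' planarWedge θ) =
      (fun _ : EuclideanSpace ℝ (Fin k) => p) ⁻¹' planarWedge θ := rfl
  by_cases hp : p ∈ planarWedge θ
  · simp [T, hp, hfst, preimage_const_of_mem]
  · simp [T, hp, hfst, preimage_const_of_notMem]

lemma setOf_norm_sq_lt_eq_ball {V : Type*} [SeminormedAddGroup V] (s : ℝ) :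
    {z : V | ‖z‖ ^ 2 < s} = Metric.ball 0 √s := by
  ext z
  rw [mem_ofPred_eq, mem_ball_zero_iff, lt_sqrt (norm_nonneg z)]

lemma volume_norm_sq_lt {n : ℕ} (hn : n ≠ 0) (s : ℝ) :
    volume {q : EuclideanSpace ℝ (Fin (2 * n)) | ‖q‖ ^ 2 < s} =
      ENNReal.ofReal s ^ n * volume (Metric.ball (0 : EuclideanSpace ℝ (Fin (2 * n))) 1) := by
  have : Nonempty (Fin (2 * n)) := ⟨⟨0, by omega⟩⟩
  rw [setOf_norm_sq_lt_eq_ball, Measure.addHaar_ball _ _ (sqrt_nonneg s),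
    finrank_euclideanSpace_fin, pow_mul, ENNReal.ofReal_pow (sq_nonneg _)]
  rcases le_or_gt 0 s with hs | hs
  · rw [sq_sqrt hs]
  · rw [sqrt_eq_zero_of_nonpos hs.le, ENNReal.ofReal_of_nonpos hs.le]
    simp

lemma lintegral_planarWedge {h : ℝ → ENNReal} (hh : Measurable h) {θ : ℝ} (hθ : θ ∈ Icc 0 π) :
    ∫⁻ p in planarWedge θ, h (p.1 ^ 2 + p.2 ^ 2) =
      ∫⁻ ρ in Ioi 0, ENNReal.ofReal ρ *
        (h (ρ ^ 2) * ENNReal.ofReal (capAngle (ρ ^ 2 - 1) - θ)) := by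
  have hF : Measurable ((planarWedge θ).indicator fun p : ℝ × ℝ => h (p.1 ^ 2 + p.2 ^ 2)) :=
    Measurable.indicator (by fun_prop) (measurableSet_planarWedge θ)
  rw [← lintegral_indicator (measurableSet_planarWedge θ), ← lintegral_comp_polarCoord_symm,
    polarCoord_target, Measure.volume_eq_prod, setLIntegral_prod]
  swap
  · exact (measurable_fst.ennreal_ofReal.smul
      (hF.comp continuous_polarCoord_symm.measurable)).aemeasurable
  refine setLIntegral_congr_fun measurableSet_Ioi fun ρ hρ => ?_
  have hwedge (α : ℝ) : polarCoord.symm (ρ, α) ∈ planarWedge θ ↔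
      1 < ρ * cos α ∧ 1 < ρ * cos (α - θ) := by
    rw [polarCoord_symm_apply, planarWedge, mem_ofPred_eq, cos_sub]
    ring_nf
  have hnorm (α : ℝ) : (polarCoord.symm (ρ, α)).1 ^ 2 + (polarCoord.symm (ρ, α)).2 ^ 2 = ρ ^ 2 := by
    simp only [polarCoord_symm_apply]
    linear_combination ρ ^ 2 * sin_sq_add_cos_sq α
  have hmeas : MeasurableSet {α | α ∈ Ioo (-π) π ∧ 1 < ρ * cos α ∧ 1 < ρ * cos (α - θ)} := by
    measurability
  calc ∫⁻ α in Ioo (-π) π, ENNReal.ofReal ρ • (planarWedge θ).indicator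
          (fun p => h (p.1 ^ 2 + p.2 ^ 2)) (polarCoord.symm (ρ, α))
      = ∫⁻ _ in {α | α ∈ Ioo (-π) π ∧ 1 < ρ * cos α ∧ 1 < ρ * cos (α - θ)},
          ENNReal.ofReal ρ * h (ρ ^ 2) := by
        rw [← lintegral_indicator measurableSet_Ioo, ← lintegral_indicator hmeas]
        refine lintegral_congr fun α => ?_
        simp only [indicator, hwedge, hnorm, mem_ofPred_eq, smul_eq_mul]
        split_ifs <;> simp_all
    _ = _ := by rw [setLIntegral_const, volume_one_lt_mul_cos hρ hθ, mul_assoc]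

lemma lintegral_Ioi_mul_comp_sq (G : ℝ → ENNReal) :
    ∫⁻ ρ in Ioi 0, ENNReal.ofReal ρ * G (ρ ^ 2) = 2⁻¹ * ∫⁻ s in Ioi 0, G s := by
  have himage : (fun ρ : ℝ => ρ ^ 2) '' Ioi 0 = Ioi 0 := by
    ext s
    refine ⟨?_, fun hs => ⟨√s, sqrt_pos.2 hs, sq_sqrt (le_of_lt hs)⟩⟩
    rintro ⟨ρ, hρ, rfl⟩
    exact pow_pos (mem_Ioi.1 hρ) 2
  have hsubst := lintegral_image_eq_lintegral_abs_deriv_mul measurableSet_Ioi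
    (fun ρ _ => (hasDerivAt_pow 2 ρ).hasDerivWithinAt)
    ((pow_left_strictMonoOn₀ two_ne_zero).injOn.mono fun ρ hρ => le_of_lt hρ) G
  rw [himage] at hsubst
  rw [hsubst, ← lintegral_const_mul' _ _ (by simp)]
  refine setLIntegral_congr_fun measurableSet_Ioi fun ρ hρ => ?_
  have habs : |(2 : ℕ) * ρ ^ (2 - 1)| = 2 * ρ := by
    simp [abs_of_pos (mem_Ioi.1 hρ)]
  rw [habs, ENNReal.ofReal_mul two_pos.le, ENNReal.ofReal_ofNat, mul_assoc, ← mul_assoc 2⁻¹,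
    ENNReal.inv_mul_cancel two_ne_zero (by simp), one_mul]

lemma lintegral_ofReal_pow_mul_capAngle {n : ℕ} (hn : n ≠ 0) {θ B : ℝ} (hθ : 0 ≤ θ) (hB : 0 ≤ B) :
    ∫⁻ s in Ioi 0, ENNReal.ofReal (1 + B - s) ^ n * ENNReal.ofReal (capAngle (s - 1) - θ) =
      ENNReal.ofReal (∫ u in (0 : ℝ)..B, (B - u) ^ n * max (capAngle u - θ) 0) := by
  set F : ℝ → ENNReal := fun s =>
    ENNReal.ofReal (1 + B - s) ^ n * ENNReal.ofReal (capAngle (s - 1) - θ)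
  have hsupport : Function.support F ⊆ Ioc 1 (1 + B) := by
    intro s hs
    contrapose! hs
    rw [mem_Ioc, not_and_or, not_lt, not_le] at hs
    rw [Function.notMem_support]
    rcases hs with hs | hs
    · have hangle : capAngle (s - 1) - θ ≤ 0 := by
        rw [capAngle_of_nonpos (sub_nonpos.2 hs), zero_sub]
        exact neg_nonpos.2 hθ
      simp only [F, ENNReal.ofReal_of_nonpos hangle, mul_zero]
    · simp only [F, ENNReal.ofReal_of_nonpos (sub_nonpos.2 hs.le), zero_pow hn, zero_mul]
  have hF (s : ℝ) (hs : s ∈ Ioc 1 (1 + B)) :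
      F s = ENNReal.ofReal ((B - (s - 1)) ^ n * max (capAngle (s - 1) - θ) 0) := by
    have hnonneg : 0 ≤ B - (s - 1) := by linarith [hs.2]
    rw [ENNReal.ofReal_mul (pow_nonneg hnonneg n), ENNReal.ofReal_pow hnonneg, ENNReal.ofReal_max,
      ENNReal.ofReal_zero, max_eq_left zero_le, ← sub_add, sub_add_eq_add_sub, add_comm B]
  have hshift := intervalIntegral.integral_comp_sub_right (a := 1) (b := 1 + B)
    (fun u => (B - u) ^ n * max (capAngle u - θ) 0) 1
  rw [sub_self, add_sub_cancel_left] at hshift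
  rw [setLIntegral_eq_of_support_subset
      (hsupport.trans fun s hs => mem_Ioi.2 (one_pos.trans hs.1)),
    ← setLIntegral_eq_of_support_subset hsupport, setLIntegral_congr_fun measurableSet_Ioc hF,
    ← hshift, intervalIntegral.integral_of_le (by linarith),
    ofReal_integral_eq_lintegral_ofReal (Continuous.integrableOn_Ioc (by fun_prop))]
  filter_upwards [ae_restrict_mem measurableSet_Ioc] with s hs
  exact mul_nonneg (pow_nonneg (by linarith [hs.2]) n) (le_max_right _ _)

lemma volume_caps_inter_ball {n : ℕ} (hn : n ≠ 0) (hE : finrank ℝ E = 2 + 2 * n) {x y : E}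
    (hx : ‖x‖ = 1) (hy : ‖y‖ = 1) {B : ℝ} (hB : 0 ≤ B) :
    volume.real {z | 1 < ⟪x, z⟫ ∧ 1 < ⟪y, z⟫ ∧ ‖z‖ ^ 2 < 1 + B} =
      volume.real (Metric.ball (0 : EuclideanSpace ℝ (Fin (2 * n))) 1) / 2 *
        ∫ u in (0 : ℝ)..B, (B - u) ^ n * max (capAngle u - arccos ⟪x, y⟫) 0 := by
  have hθ : arccos ⟪x, y⟫ ∈ Icc 0 π := ⟨arccos_nonneg _, arccos_le_pi _⟩
  have hnonneg : 0 ≤ ∫ u in (0 : ℝ)..B, (B - u) ^ n * max (capAngle u - arccos ⟪x, y⟫) 0 :=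
    intervalIntegral.integral_nonneg hB fun u hu =>
      mul_nonneg (pow_nonneg (sub_nonneg.2 hu.2) n) (le_max_right _ _)
  rw [measureReal_def, volume_caps_inter_ball_eq_lintegral hE hx hy]
  simp only [volume_norm_sq_lt hn]
  rw [lintegral_mul_const _ (by fun_prop),
    lintegral_planarWedge (h := fun s => ENNReal.ofReal (1 + B - s) ^ n) (by fun_prop) hθ,
    lintegral_Ioi_mul_comp_sq fun s => ENNReal.ofReal (1 + B - s) ^ n *
      ENNReal.ofReal (capAngle (s - 1) - arccos ⟪x, y⟫),
    lintegral_ofReal_pow_mul_capAngle hn hθ.1 hB, ENNReal.toReal_mul, ENNReal.toReal_mul,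
    ENNReal.toReal_ofReal hnonneg, ENNReal.toReal_inv, ENNReal.toReal_ofNat, measureReal_def]
  ring

end WedgeVolume

/-- The quadratic form `∑ i j, c i c j g(θ i j)` of the matrix that the isotropic kernel `g` assigns
to the points `x i`, where `θ i j` is the angle between the unit vectors `x i` and `x j`. -/
noncomputable def kernelForm {ι E : Type*} [Fintype ι] [NormedAddCommGroup E]
    [InnerProductSpace ℝ E] (x : ι → E) (c : ι → ℝ) (g : ℝ → ℝ) : ℝ :=
  ∑ i, ∑ j, c i * c j * g (arccos ⟪x i, x j⟫)

section KernelForm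

variable {ι E : Type*} [Fintype ι] [NormedAddCommGroup E] [InnerProductSpace ℝ E] (x : ι → E)
  (c : ι → ℝ)

lemma kernelForm_congr {g h : ℝ → ℝ} (hgh : EqOn g h (Icc 0 π)) :
    kernelForm x c g = kernelForm x c h :=
  Finset.sum_congr rfl fun _ _ => Finset.sum_congr rfl fun _ _ =>
    congrArg _ (hgh ⟨arccos_nonneg _, arccos_le_pi _⟩)

lemma kernelForm_const_mul (a : ℝ) (g : ℝ → ℝ) :
    kernelForm x c (fun θ => a * g θ) = a * kernelForm x c g := by
  simp only [kernelForm, Finset.mul_sum, mul_left_comm]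

lemma continuous_kernelForm {Y : Type*} [TopologicalSpace Y] {G : Y → ℝ → ℝ}
    (hG : ∀ θ, Continuous fun y => G y θ) : Continuous fun y => kernelForm x c (G y) :=
  continuous_finsetSum _ fun _ _ => continuous_finsetSum _ fun _ _ => (hG _).const_mul _

lemma intervalIntegrable_kernelForm {G : ℝ → ℝ → ℝ} {a b : ℝ}
    (hG : ∀ θ, IntervalIntegrable (fun s => G s θ) volume a b) :
    IntervalIntegrable (fun s => kernelForm x c (G s)) volume a b := by
  simpa only [kernelForm, Finset.sum_fn] using IntervalIntegrable.sum Finset.univ fun i _ =>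
    IntervalIntegrable.sum Finset.univ fun j _ => (hG (arccos ⟪x i, x j⟫)).const_mul (c i * c j)

lemma intervalIntegral_kernelForm {G : ℝ → ℝ → ℝ} {a b : ℝ}
    (hG : ∀ θ, IntervalIntegrable (fun s => G s θ) volume a b) :
    ∫ s in a..b, kernelForm x c (G s) = kernelForm x c fun θ => ∫ s in a..b, G s θ := by
  simp only [kernelForm, ← Fintype.sum_prod_type']
  rw [intervalIntegral.integral_finsetSum fun _ _ => (hG _).const_mul _]
  simp only [intervalIntegral.integral_const_mul]

end KernelForm

section Overlap

variable {α ι : Type*} [MeasurableSpace α] {μ : Measure α} [Fintype ι] {S : ι → Set α}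

lemma sum_measureReal_inter_eq_setIntegral_sq (hS : ∀ i, MeasurableSet (S i)) (c : ι → ℝ)
    {K : Set α} (hK : μ K ≠ ⊤) :
    ∑ i, ∑ j, c i * c j * μ.real (S i ∩ S j ∩ K) =
      ∫ z in K, (∑ i, c i * (S i).indicator 1 z) ^ 2 ∂μ := by
  have hint (i j : ι) :
      Integrable (fun z => c i * c j * (S i ∩ S j).indicator (1 : α → ℝ) z) (μ.restrict K) :=
    ((integrableOn_const (C := (1 : ℝ)) hK).integrable.indicator
      ((hS i).inter (hS j))).const_mul _
  have hsq (z : α) : (∑ i, c i * (S i).indicator 1 z) ^ 2 =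
      ∑ i, ∑ j, c i * c j * (S i ∩ S j).indicator (1 : α → ℝ) z := by
    simp only [pow_two, Finset.sum_mul_sum, mul_mul_mul_comm, inter_indicator_one, Pi.mul_apply]
  simp only [hsq]
  rw [integral_finsetSum _ fun i _ => integrable_finsetSum _ fun j _ => hint i j]
  refine Finset.sum_congr rfl fun i _ => ?_
  rw [integral_finsetSum _ fun j _ => hint i j]
  refine Finset.sum_congr rfl fun j _ => ?_
  rw [integral_const_mul, integral_indicator_one ((hS i).inter (hS j)),
    measureReal_restrict_apply ((hS i).inter (hS j))]

lemma sum_measureReal_inter_mono (hS : ∀ i, MeasurableSet (S i)) (c : ι → ℝ) {K L : Set α}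
    (hK : MeasurableSet K) (hKL : K ⊆ L) (hL : μ L ≠ ⊤) :
    ∑ i, ∑ j, c i * c j * μ.real (S i ∩ S j ∩ K) ≤
      ∑ i, ∑ j, c i * c j * μ.real (S i ∩ S j ∩ L) := by
  have hsplit (T : Set α) : μ.real (T ∩ L) = μ.real (T ∩ K) + μ.real (T ∩ (L \ K)) := by
    rw [← measureReal_inter_add_sdiff (s := T ∩ L) hK
        (measure_ne_top_of_subset inter_subset_right hL),
      inter_assoc, inter_eq_right.2 hKL, inter_sdiff_assoc]
  simp only [hsplit, mul_add, Finset.sum_add_distrib]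
  rw [sum_measureReal_inter_eq_setIntegral_sq hS c (measure_ne_top_of_subset sdiff_subset hL)]
  exact le_add_of_nonneg_right (integral_nonneg fun z => sq_nonneg _)

end Overlap

lemma eventually_lt_arccos_inner {ι E : Type*} [Finite ι] [NormedAddCommGroup E]
    [InnerProductSpace ℝ E] {x : ι → E} (hx : ∀ i, ‖x i‖ = 1) (hinj : Function.Injective x) :
    ∀ᶠ s in 𝓝 (0 : ℝ), ∀ i j, i ≠ j → s < arccos ⟪x i, x j⟫ := by
  simp only [eventually_all]
  intro i j hij
  exact eventually_lt_nhds (arccos_pos.2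
    ((inner_lt_one_iff_real_of_norm_eq_one (hx i) (hx j)).2 (hinj.ne hij)))

/-- The quadratic form of the kernel `θ ↦ (capAngle u - θ)₊`, the length of the overlap of two
arcs of length `capAngle u` whose centres are at angle `θ`. -/
noncomputable def capOverlapForm {ι E : Type*} [Fintype ι] [NormedAddCommGroup E]
    [InnerProductSpace ℝ E] (x : ι → E) (c : ι → ℝ) (u : ℝ) : ℝ :=
  kernelForm x c fun θ => max (capAngle u - θ) 0

section CapOverlapForm

variable {ι E : Type*} [Fintype ι] [NormedAddCommGroup E] [InnerProductSpace ℝ E] {x : ι → E}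

lemma continuous_capOverlapForm (x : ι → E) (c : ι → ℝ) : Continuous (capOverlapForm x c) :=
  continuous_kernelForm x c fun _ => by fun_prop

lemma kernelForm_eq_sum_sq_mul (hx : ∀ i, ‖x i‖ = 1) (c : ι → ℝ) {g : ℝ → ℝ}
    (hg : ∀ i j, i ≠ j → g (arccos ⟪x i, x j⟫) = 0) :
    kernelForm x c g = (∑ i, c i ^ 2) * g 0 := by
  rw [kernelForm, Finset.sum_mul]
  refine Finset.sum_congr rfl fun i _ => ?_
  rw [Fintype.sum_eq_single i fun j hj => by rw [hg i j hj.symm, mul_zero],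
    real_inner_self_eq_norm_sq, hx i, one_pow, arccos_one, pow_two]

lemma exists_capOverlapForm_pos (hx : ∀ i, ‖x i‖ = 1) (hinj : Function.Injective x) {c : ι → ℝ}
    (hc : c ≠ 0) : ∃ b > 0, ∀ u ∈ Ioc 0 b, 0 < capOverlapForm x c u := by
  have hsmall : ∀ᶠ u in 𝓝 (0 : ℝ), ∀ i j, i ≠ j → capAngle u < arccos ⟪x i, x j⟫ := by
    have hcap := continuous_capAngle.tendsto 0
    rw [capAngle_of_nonpos le_rfl] at hcap
    exact hcap.eventually (eventually_lt_arccos_inner hx hinj)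
  obtain ⟨b, hb, hsep⟩ := ((nhdsGT_basis 0).eventually_iff).1 (hsmall.filter_mono inf_le_left)
  refine ⟨b / 2, half_pos hb, fun u hu => ?_⟩
  have hoff (i j : ι) (hij : i ≠ j) : max (capAngle u - arccos ⟪x i, x j⟫) 0 = 0 :=
    max_eq_right (sub_nonpos.2 (hsep ⟨hu.1, hu.2.trans_lt (half_lt_self hb)⟩ i j hij).le)
  obtain ⟨i, hi⟩ := Function.ne_iff.1 hc
  have hsum : 0 < ∑ i, c i ^ 2 := Finset.sum_pos' (fun i _ => sq_nonneg (c i))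
    ⟨i, Finset.mem_univ i, sq_pos_of_ne_zero hi⟩
  rw [capOverlapForm, kernelForm_eq_sum_sq_mul hx c hoff, sub_zero]
  exact mul_pos hsum (lt_max_of_lt_left (capAngle_pos hu.1))

variable [FiniteDimensional ℝ E] [MeasurableSpace E] [BorelSpace E] {n : ℕ}

lemma sum_volume_caps_inter_ball (hn : n ≠ 0) (hE : finrank ℝ E = 2 + 2 * n)
    (hx : ∀ i, ‖x i‖ = 1) (c : ι → ℝ) {B : ℝ} (hB : 0 ≤ B) :
    ∑ i, ∑ j, c i * c j *
        volume.real ({z | 1 < ⟪x i, z⟫} ∩ {z | 1 < ⟪x j, z⟫} ∩ {z | ‖z‖ ^ 2 < 1 + B}) =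
      volume.real (Metric.ball (0 : EuclideanSpace ℝ (Fin (2 * n))) 1) / 2 *
        (n.factorial * primitive^[n + 1] (capOverlapForm x c) B) := by
  have hset (i j : ι) : {z | 1 < ⟪x i, z⟫} ∩ {z | 1 < ⟪x j, z⟫} ∩ {z | ‖z‖ ^ 2 < 1 + B} =
      {z | 1 < ⟪x i, z⟫ ∧ 1 < ⟪x j, z⟫ ∧ ‖z‖ ^ 2 < 1 + B} := by
    rw [inter_assoc]
    rfl
  simp only [hset, volume_caps_inter_ball hn hE (hx _) (hx _) hB]
  rw [← integral_sub_pow_mul_eq_iterate_primitive (continuous_capOverlapForm x c)]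
  simp only [capOverlapForm, ← kernelForm_const_mul]
  rw [intervalIntegral_kernelForm x c fun θ => Continuous.intervalIntegrable (by fun_prop) _ _,
    ← kernelForm_const_mul, kernelForm]

lemma monotoneOn_iterate_primitive_capOverlapForm (hn : n ≠ 0) (hE : finrank ℝ E = 2 + 2 * n)
    (hx : ∀ i, ‖x i‖ = 1) (c : ι → ℝ) :
    MonotoneOn (primitive^[n + 1] (capOverlapForm x c)) (Ici 0) := by
  intro a ha b hb hab
  have hmono := sum_measureReal_inter_mono (μ := (volume : Measure E))
    (S := fun i => {z | 1 < ⟪x i, z⟫})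
    (fun i => measurableSet_lt (by fun_prop) (by fun_prop)) c
    Metric.isOpen_ball.measurableSet
    (Metric.ball_subset_ball (x := 0) (sqrt_le_sqrt (add_le_add_right hab 1)))
    measure_ball_lt_top.ne
  simp only [← setOf_norm_sq_lt_eq_ball] at hmono
  rw [sum_volume_caps_inter_ball hn hE hx c ha, sum_volume_caps_inter_ball hn hE hx c hb] at hmono
  have hunit : 0 < volume.real (Metric.ball (0 : EuclideanSpace ℝ (Fin (2 * n))) 1) :=
    ENNReal.toReal_pos (Metric.measure_ball_pos _ _ one_pos).ne' measure_ball_lt_top.ne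
  exact le_of_mul_le_mul_left (le_of_mul_le_mul_left hmono (by positivity)) (by positivity)

end CapOverlapForm

section BetaMixture

variable {k : ℕ} {γ t θ : ℝ}

lemma intervalIntegrable_max_sub_pow_mul_sub_rpow (k : ℕ) (hγ : -1 < γ) (θ t : ℝ) :
    IntervalIntegrable (fun s => max (s - θ) 0 ^ k * (t - s) ^ γ) volume 0 t := by
  have hrpow : IntervalIntegrable (fun s => (t - s) ^ γ) volume 0 t := by
    simpa only [sub_self, sub_zero] using
      (intervalIntegral.intervalIntegrable_rpow' (a := t) (b := 0) hγ).comp_sub_left t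
  exact hrpow.continuousOn_mul (by fun_prop)

lemma integral_pow_mul_one_sub_rpow_pos (k : ℕ) (hγ : -1 < γ) :
    0 < ∫ s in (0 : ℝ)..1, max s 0 ^ k * (1 - s) ^ γ := by
  have hint := intervalIntegrable_max_sub_pow_mul_sub_rpow k hγ 0 1
  simp only [sub_zero] at hint
  refine intervalIntegral.intervalIntegral_pos_of_pos_on hint (fun s hs => ?_) one_pos
  have := sub_pos.2 hs.2
  have := hs.1.trans_le (le_max_left s 0)
  positivity

lemma integral_max_sub_pow_mul_sub_rpow (hk : k ≠ 0) (hγ : -1 < γ) (hθ : 0 ≤ θ) (ht : 0 ≤ t) :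
    ∫ s in (0 : ℝ)..t, max (s - θ) 0 ^ k * (t - s) ^ γ =
      (∫ s in (0 : ℝ)..1, max s 0 ^ k * (1 - s) ^ γ) * max (t - θ) 0 ^ (k + γ + 1) := by
  have hvanish {b : ℝ} (hb : 0 ≤ b) (hbθ : b ≤ θ) :
      ∫ s in (0 : ℝ)..b, max (s - θ) 0 ^ k * (t - s) ^ γ = 0 := by
    refine intervalIntegral.integral_zero_ae (Eventually.of_forall fun s hs => ?_)
    rw [uIoc_of_le hb] at hs
    rw [max_eq_right (sub_nonpos.2 (hs.2.trans hbθ)), zero_pow hk, zero_mul]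
  rcases le_or_gt t θ with htθ | hθt
  · have hexp : (k : ℝ) + γ + 1 ≠ 0 := by linarith [k.cast_nonneg (α := ℝ)]
    rw [hvanish ht htθ, max_eq_right (sub_nonpos.2 htθ), zero_rpow hexp, mul_zero]
  have hpos : 0 < t - θ := sub_pos.2 hθt
  have hint := intervalIntegrable_max_sub_pow_mul_sub_rpow k hγ θ t
  have hmem : θ ∈ uIcc 0 t := by
    rw [uIcc_of_le ht]
    exact ⟨hθ, hθt.le⟩
  have hscale := intervalIntegral.smul_integral_comp_add_mul (a := 0) (b := 1)
    (fun s => max (s - θ) 0 ^ k * (t - s) ^ γ) (t - θ) θ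
  rw [mul_zero, mul_one, add_zero, add_sub_cancel, smul_eq_mul] at hscale
  rw [← intervalIntegral.integral_add_adjacent_intervals
      (hint.mono_set (uIcc_subset_uIcc_left hmem)) (hint.mono_set (uIcc_subset_uIcc_right hmem)),
    hvanish hθ le_rfl, zero_add, ← hscale, ← intervalIntegral.integral_const_mul,
    ← intervalIntegral.integral_mul_const]
  refine intervalIntegral.integral_congr fun s hs => ?_
  rw [uIcc_of_le zero_le_one] at hs
  rw [add_sub_cancel_left, max_eq_left (mul_nonneg hpos.le hs.1), max_eq_left hs.1,
    max_eq_left hpos.le, ← sub_sub, ← mul_one_sub, mul_rpow hpos.le (sub_nonneg.2 hs.2), mul_pow,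
    rpow_add_one hpos.ne', rpow_add hpos, rpow_natCast]
  ring

end BetaMixture

/-- The weight `(capAngle U - capAngle u) ^ m * capAngle' u`, which the substitution
`s = capAngle u` turns into `(capAngle U - s) ^ m`. -/
noncomputable def capWeight (m : ℕ) (U u : ℝ) : ℝ :=
  u ^ (-(1 / 2) : ℝ) * ((capAngle U - capAngle u) ^ m * (u + 1) ^ (-1 : ℝ))

section CapWeight

variable {m : ℕ} {u U : ℝ}

lemma hasDerivAt_capAngle (hu : 0 < u) :
    HasDerivAt capAngle (u ^ (-(1 / 2) : ℝ) * (u + 1) ^ (-1 : ℝ)) u := by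
  refine (((hasDerivAt_sqrt hu.ne').arctan).const_mul 2).congr_deriv ?_
  rw [sq_sqrt hu.le, rpow_neg hu.le, rpow_neg_one, ← sqrt_eq_rpow]
  have := sqrt_pos.2 hu
  field_simp
  ring

lemma contDiffAt_capAngle (hu : 0 < u) : ContDiffAt ℝ ω capAngle u :=
  contDiffAt_const.mul (contDiff_arctan.contDiffAt.comp u (contDiffAt_sqrt hu.ne'))

lemma completelyMonotoneAt_add_one_rpow (hu : 0 < u) :
    CompletelyMonotoneAt (fun v => (v + 1) ^ (-1 : ℝ)) u :=
  (completelyMonotoneAt_rpow_neg one_pos (by positivity)).comp_add_const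

lemma completelyMonotoneAt_capAngle_sub (hu : 0 < u) (huU : u ≤ U) :
    CompletelyMonotoneAt (fun v => capAngle U - capAngle v) u := by
  refine .of_neg_deriv (contDiffAt_const.sub ((contDiffAt_capAngle hu).of_le le_top))
    (sub_nonneg.2 (strictMonoOn_capAngle.monotoneOn hu.le (hu.le.trans huU) huU))
    ((completelyMonotoneAt_rpow_neg one_half_pos hu).mul (completelyMonotoneAt_add_one_rpow hu)) ?_
  filter_upwards [lt_mem_nhds hu] with v hv
  exact ((hasDerivAt_capAngle hv).const_sub _).deriv

lemma completelyMonotoneAt_capWeight (m : ℕ) (hu : 0 < u) (huU : u ≤ U) :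
    CompletelyMonotoneAt (capWeight m U) u :=
  (completelyMonotoneAt_rpow_neg one_half_pos hu).mul
    (((completelyMonotoneAt_capAngle_sub hu huU).pow m).mul (completelyMonotoneAt_add_one_rpow hu))

lemma le_neg_one_pow_mul_iteratedDeriv_capWeight (m n : ℕ) {a U₀ : ℝ} (hu : 0 < u) (hua : u ≤ a)
    (haU₀ : a ≤ U₀) (hU₀U : U₀ ≤ U) :
    (ascPochhammer ℝ n).eval (1 / 2) * a ^ (-(1 / 2) - n : ℝ) *
        ((capAngle U₀ - capAngle a) ^ m * (a + 1) ^ (-1 : ℝ)) ≤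
      (-1) ^ n * iteratedDeriv n (capWeight m U) u := by
  have ha : 0 < a := hu.trans_le hua
  have hua' : capAngle u ≤ capAngle a := strictMonoOn_capAngle.monotoneOn hu.le ha.le hua
  have haU₀' : capAngle a ≤ capAngle U₀ :=
    strictMonoOn_capAngle.monotoneOn ha.le (ha.le.trans haU₀) haU₀
  have hU₀U' : capAngle U₀ ≤ capAngle U :=
    strictMonoOn_capAngle.monotoneOn (ha.le.trans haU₀) ((ha.le.trans haU₀).trans hU₀U) hU₀U
  have hpoch : 0 < (ascPochhammer ℝ n).eval (1 / 2) := ascPochhammer_pos n _ one_half_pos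
  have hrpow : a ^ (-(1 / 2) - n : ℝ) ≤ u ^ (-(1 / 2) - n : ℝ) :=
    rpow_le_rpow_of_nonpos hu hua (by linarith [n.cast_nonneg (α := ℝ)])
  have hrpow' : (a + 1) ^ (-1 : ℝ) ≤ (u + 1) ^ (-1 : ℝ) :=
    rpow_le_rpow_of_nonpos (by positivity) (by gcongr) (by norm_num)
  have hpow : (capAngle U₀ - capAngle a) ^ m ≤ (capAngle U - capAngle u) ^ m :=
    pow_le_pow_left₀ (sub_nonneg.2 haU₀') (by linarith) m
  have hpow_nonneg : 0 ≤ (capAngle U₀ - capAngle a) ^ m := pow_nonneg (sub_nonneg.2 haU₀') m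
  have hpow_nonneg' := hpow_nonneg.trans hpow
  have hrpow_cm := completelyMonotoneAt_rpow_neg one_half_pos hu
  have hrest_cm := ((completelyMonotoneAt_capAngle_sub hu (hua.trans (haU₀.trans hU₀U))).pow m).mul
    (completelyMonotoneAt_add_one_rpow hu)
  calc (ascPochhammer ℝ n).eval (1 / 2) * a ^ (-(1 / 2) - n : ℝ) *
        ((capAngle U₀ - capAngle a) ^ m * (a + 1) ^ (-1 : ℝ))
      ≤ (ascPochhammer ℝ n).eval (1 / 2) * u ^ (-(1 / 2) - n : ℝ) *
        ((capAngle U - capAngle u) ^ m * (u + 1) ^ (-1 : ℝ)) := by gcongr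
    _ ≤ (-1) ^ n * iteratedDeriv n (capWeight m U) u := by
      rw [← neg_one_pow_mul_iteratedDeriv_rpow]
      exact hrpow_cm.apply_mul_le_neg_one_pow_mul_iteratedDeriv_mul hrest_cm n

lemma iteratedDeriv_capWeight_self (hU : 0 < U) {j : ℕ} (hj : j < m) :
    iteratedDeriv j (capWeight m U) U = 0 := by
  have hcomm : capWeight m U = (fun v => capAngle U - capAngle v) ^ m *
      fun v => v ^ (-(1 / 2) : ℝ) * (v + 1) ^ (-1 : ℝ) :=
    funext fun v => mul_left_comm _ _ _
  have hangle : AnalyticAt ℝ (fun v => capAngle U - capAngle v) U :=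
    (contDiffAt_const.sub (contDiffAt_capAngle hU)).analyticAt
  have hrpow : AnalyticAt ℝ (fun v => v ^ (-(1 / 2) : ℝ) * (v + 1) ^ (-1 : ℝ)) U :=
    ((contDiffAt_rpow_const_of_ne hU.ne').mul
      ((contDiffAt_id.add contDiffAt_const).rpow_const_of_ne (by positivity))).analyticAt
  rw [hcomm]
  exact iteratedDeriv_pow_mul_eq_zero hangle hrpow (sub_self _) hj

lemma intervalIntegrable_capWeight (m : ℕ) (hU : 0 ≤ U) :
    IntervalIntegrable (capWeight m U) volume 0 U := by
  refine (intervalIntegral.intervalIntegrable_rpow' (by norm_num)).mul_continuousOn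
    (.mul (by fun_prop) (.rpow_const (by fun_prop) fun u hu => .inl ?_))
  rw [uIcc_of_le hU] at hu
  exact (add_pos_of_nonneg_of_pos hu.1 one_pos).ne'

lemma integral_capWeight_mul_comp (m : ℕ) (hU : 0 ≤ U) {g : ℝ → ℝ} (hg : Continuous g) :
    ∫ u in (0 : ℝ)..U, capWeight m U u * g (capAngle u) =
      ∫ s in (0 : ℝ)..capAngle U, g s * (capAngle U - s) ^ m := by
  have hcomm (u : ℝ) : capWeight m U u * g (capAngle u) =
      g (capAngle u) * (capAngle U - capAngle u) ^ m *
        (u ^ (-(1 / 2) : ℝ) * (u + 1) ^ (-1 : ℝ)) := by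
    rw [capWeight]
    ring
  have hsubst : Continuous fun s => g s * (capAngle U - s) ^ m := by fun_prop
  have hint : IntervalIntegrable (fun u => capWeight m U u * g (capAngle u)) volume 0 U :=
    (intervalIntegrable_capWeight m hU).mul_continuousOn
      (hg.comp continuous_capAngle).continuousOn
  simp only [hcomm] at hint ⊢
  have := intervalIntegral.integral_comp_mul_deriv''' (a := 0) (b := U)
    continuous_capAngle.continuousOn
    (fun u hu => (hasDerivAt_capAngle (by simpa [hU] using hu.1)).hasDerivWithinAt)
    hsubst.continuousOn (hsubst.continuousOn.integrableOn_compact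
      (isCompact_uIcc.image continuous_capAngle))
    (by rwa [uIcc_of_le hU, integrableOn_Icc_iff_integrableOn_Ioc,
      ← intervalIntegrable_iff_integrableOn_Ioc_of_le hU])
  rwa [capAngle_of_nonpos le_rfl] at this

end CapWeight

section Positivity

variable {ι E : Type*} [Fintype ι] [NormedAddCommGroup E] [InnerProductSpace ℝ E] {x : ι → E}
  {c : ι → ℝ} {m : ℕ}

lemma integral_capWeight_mul_capOverlapForm (x : ι → E) (c : ι → ℝ) (m : ℕ) {U : ℝ}
    (hU : 0 ≤ U) :
    ∫ u in (0 : ℝ)..U, capWeight m U u * capOverlapForm x c u =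
      (∫ s in (0 : ℝ)..1, max s 0 ^ 1 * (1 - s) ^ (m : ℝ)) *
        kernelForm x c fun θ => max (capAngle U - θ) 0 ^ (m + 2) := by
  simp only [capOverlapForm, ← kernelForm_const_mul]
  rw [intervalIntegral_kernelForm x c fun θ =>
    (intervalIntegrable_capWeight m hU).mul_continuousOn (by fun_prop)]
  refine kernelForm_congr x c fun θ hθ => ?_
  have hmix := integral_max_sub_pow_mul_sub_rpow one_ne_zero
    (neg_one_lt_zero.trans_le m.cast_nonneg) hθ.1 (capAngle_nonneg U)
  have hexp : ((1 : ℕ) + m + 1 : ℝ) = (m + 2 : ℕ) := by push_cast; ring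
  rw [hexp, rpow_natCast] at hmix
  simp only [pow_one, rpow_natCast] at hmix ⊢
  rw [← hmix]
  exact integral_capWeight_mul_comp m hU (g := fun s => max (s - θ) 0) (by fun_prop)

variable [FiniteDimensional ℝ E] [MeasurableSpace E] [BorelSpace E]

lemma exists_pos_le_integral_capWeight_mul (hE : finrank ℝ E = 2 + 2 * (m + 1))
    (hx : ∀ i, ‖x i‖ = 1) {a U₀ : ℝ} (ha : 0 < a) (haU₀ : a < U₀)
    (hpos : ∀ u ∈ Ioc 0 a, 0 < capOverlapForm x c u) :
    ∃ κ > 0, ∀ U ≥ U₀, κ ≤ ∫ u in (0 : ℝ)..U, capWeight m U u * capOverlapForm x c u := by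
  have hw := continuous_capOverlapForm x c
  have hangle : 0 < capAngle U₀ - capAngle a :=
    sub_pos.2 (strictMonoOn_capAngle ha.le (ha.trans haU₀).le haU₀)
  have hpoch := ascPochhammer_pos (m + 1) (1 / 2 : ℝ) one_half_pos
  have hprim_pos := iterate_primitive_pos hw hpos (m + 2) a ⟨ha, le_rfl⟩
  have hprim_nonneg := iterate_primitive_nonneg_of_monotoneOn hw (m + 1)
    (monotoneOn_iterate_primitive_capOverlapForm m.succ_ne_zero hE hx c)
  refine ⟨(ascPochhammer ℝ (m + 1)).eval (1 / 2) * a ^ (-(1 / 2) - (m + 1 : ℕ) : ℝ) *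
    ((capAngle U₀ - capAngle a) ^ m * (a + 1) ^ (-1 : ℝ)) *
    primitive^[m + 2] (capOverlapForm x c) a, by positivity, fun U hU => ?_⟩
  have haU : a < U := haU₀.trans_le hU
  have hcm (v : ℝ) (hv : v ∈ Ioc 0 U) := completelyMonotoneAt_capWeight m hv.1 hv.2
  exact mul_iterate_primitive_le_integral_mul hw ha haU.le
    (intervalIntegrable_capWeight m (ha.trans haU).le)
    (fun v hv => (hcm v hv).contDiffAt.of_le (mod_cast le_top))
    (fun v hv => le_neg_one_pow_mul_iteratedDeriv_capWeight m (m + 1) hv.1 hv.2 haU₀.le hU)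
    (fun v hv => (hcm v hv).neg_one_pow_mul_nonneg (m + 1))
    ((hcm U ⟨ha.trans haU, le_rfl⟩).neg_one_pow_mul_nonneg m)
    (fun j hj => iteratedDeriv_capWeight_self (ha.trans haU) hj)
    (fun u hu => (hpos u hu).le) (fun u hu => hprim_nonneg u hu.1.le)

lemma exists_pos_le_kernelForm_capAngle (hE : finrank ℝ E = 2 + 2 * (m + 1))
    (hx : ∀ i, ‖x i‖ = 1) (hinj : Function.Injective x) (hc : c ≠ 0) {U₀ : ℝ} (hU₀ : 0 < U₀) :
    ∃ κ > 0, ∀ U ≥ U₀, κ ≤ kernelForm x c fun θ => max (capAngle U - θ) 0 ^ (m + 2) := by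
  obtain ⟨b, hb, hpos⟩ := exists_capOverlapForm_pos hx hinj hc
  obtain ⟨κ, hκ, hle⟩ := exists_pos_le_integral_capWeight_mul (m := m) hE hx
    (lt_min hb (half_pos hU₀)) (min_lt_of_right_lt (half_lt_self hU₀))
    fun u hu => hpos u ⟨hu.1, hu.2.trans (min_le_left _ _)⟩
  have hK := integral_pow_mul_one_sub_rpow_pos 1 (neg_one_lt_zero.trans_le (m.cast_nonneg (α := ℝ)))
  refine ⟨_, div_pos hκ hK, fun U hU => (div_le_iff₀' hK).2 ?_⟩
  rw [← integral_capWeight_mul_capOverlapForm x c m (hU₀.le.trans hU)]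
  exact hle U hU

lemma kernelForm_max_sub_pow_pos (hE : finrank ℝ E = 2 + 2 * (m + 1)) (hx : ∀ i, ‖x i‖ = 1)
    (hinj : Function.Injective x) (hc : c ≠ 0) {t : ℝ} (ht : t ∈ Ioc 0 π) :
    0 < kernelForm x c fun θ => max (t - θ) 0 ^ (m + 2) := by
  rcases ht.2.lt_or_eq with htπ | rfl
  · have htan : 0 < tan (t / 2) :=
      tan_pos_of_pos_of_lt_pi_div_two (half_pos ht.1) (by linarith)
    obtain ⟨κ, hκ, hle⟩ := exists_pos_le_kernelForm_capAngle hE hx hinj hc (pow_pos htan 2)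
    simpa only [capAngle_tan_sq ht.1.le htπ] using hκ.trans_le (hle _ le_rfl)
  · obtain ⟨κ, hκ, hle⟩ := exists_pos_le_kernelForm_capAngle hE hx hinj hc one_pos
    have hcont : Continuous fun s => kernelForm x c fun θ => max (s - θ) 0 ^ (m + 2) :=
      continuous_kernelForm x c fun θ => by fun_prop
    exact hκ.trans_le (ge_of_tendsto ((hcont.tendsto π).comp tendsto_capAngle_atTop)
      ((eventually_ge_atTop 1).mono hle))

lemma kernelForm_max_sub_rpow_pos (hE : finrank ℝ E = 2 + 2 * (m + 1)) (hx : ∀ i, ‖x i‖ = 1)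
    (hinj : Function.Injective x) (hc : c ≠ 0) {t : ℝ} (ht : t ∈ Ioc 0 π) {δ : ℝ}
    (hδ : (m + 2 : ℕ) ≤ δ) : 0 < kernelForm x c fun θ => max (t - θ) 0 ^ δ := by
  rcases hδ.eq_or_lt with rfl | hδ
  · simpa only [rpow_natCast] using kernelForm_max_sub_pow_pos hE hx hinj hc ht
  have hγ : -1 < δ - (m + 2 : ℕ) - 1 := by linarith
  have hmix : ∫ s in (0 : ℝ)..t,
        kernelForm x c (fun θ => max (s - θ) 0 ^ (m + 2) * (t - s) ^ (δ - (m + 2 : ℕ) - 1)) =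
      (∫ s in (0 : ℝ)..1, max s 0 ^ (m + 2) * (1 - s) ^ (δ - (m + 2 : ℕ) - 1)) *
        kernelForm x c fun θ => max (t - θ) 0 ^ δ := by
    rw [intervalIntegral_kernelForm x c fun θ =>
        intervalIntegrable_max_sub_pow_mul_sub_rpow (m + 2) hγ θ t, ← kernelForm_const_mul]
    refine kernelForm_congr x c fun θ hθ => ?_
    simp only [integral_max_sub_pow_mul_sub_rpow (m + 1).succ_ne_zero hγ hθ.1 ht.1.le]
    congr 2
    ring
  refine pos_of_mul_pos_right (hmix ▸ ?_) (integral_pow_mul_one_sub_rpow_pos (m + 2) hγ).le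
  refine intervalIntegral.intervalIntegral_pos_of_pos_on (intervalIntegrable_kernelForm x c fun θ =>
    intervalIntegrable_max_sub_pow_mul_sub_rpow (m + 2) hγ θ t) (fun s hs => ?_) ht.1
  simp only [mul_comm (max _ _ ^ _), kernelForm_const_mul]
  exact mul_pos (rpow_pos_of_pos (sub_pos.2 hs.2) _)
    (kernelForm_max_sub_pow_pos hE hx hinj hc ⟨hs.1, hs.2.le.trans ht.2⟩)

end Positivity

lemma nonempty_linearIsometry_of_finrank_le {𝕜 E F : Type*} [RCLike 𝕜] [NormedAddCommGroup E]
    [InnerProductSpace 𝕜 E] [FiniteDimensional 𝕜 E] [NormedAddCommGroup F] [InnerProductSpace 𝕜 F]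
    [FiniteDimensional 𝕜 F] (h : finrank 𝕜 E ≤ finrank 𝕜 F) : Nonempty (E →ₗᵢ[𝕜] F) := by
  let b := stdOrthonormalBasis 𝕜 E
  let f := b.toBasis.constr 𝕜 (stdOrthonormalBasis 𝕜 F ∘ Fin.castLE h)
  have hf : f ∘ b.toBasis = stdOrthonormalBasis 𝕜 F ∘ Fin.castLE h :=
    funext fun i => b.toBasis.constr_basis _ _ _
  refine ⟨f.isometryOfOrthonormal (v := b.toBasis) (by simp) ?_⟩
  exact hf ▸ (stdOrthonormalBasis 𝕜 F).orthonormal.comp _ (Fin.castLE_injective h)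

lemma dotProduct_mulVec_eq_kernelForm {ι E : Type*} [Fintype ι] [NormedAddCommGroup E]
    [InnerProductSpace ℝ E] (x : ι → E) (c : ι → ℝ) (g : ℝ → ℝ) :
    c ⬝ᵥ Matrix.mulVec (.of fun i j => g (arccos ⟪x i, x j⟫)) c = kernelForm x c g := by
  simp only [dotProduct, Matrix.mulVec, Matrix.of_apply, Finset.mul_sum, kernelForm, mul_comm (g _),
    mul_assoc]

lemma kernelForm_linearIsometry_comp {ι E F : Type*} [Fintype ι] [NormedAddCommGroup E]
    [InnerProductSpace ℝ E] [NormedAddCommGroup F] [InnerProductSpace ℝ F] (f : E →ₗᵢ[ℝ] F)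
    (x : ι → E) (c : ι → ℝ) (g : ℝ → ℝ) : kernelForm (f ∘ x) c g = kernelForm x c g := by
  simp only [kernelForm, Function.comp_apply, LinearIsometry.inner_map_map]

lemma ceil_natCast_div_two (d : ℕ) : ⌈(d : ℝ) / 2⌉ = ((d + 1) / 2 : ℕ) := by
  rw [Int.ceil_eq_iff, Int.cast_natCast, lt_div_iff₀' two_pos, div_le_iff₀' two_pos]
  have hlt : 2 * (((d + 1) / 2 : ℕ) : ℝ) < d + 2 := by exact_mod_cast (by omega)
  have hle : (d : ℝ) ≤ 2 * ((d + 1) / 2 : ℕ) := by exact_mod_cast (by omega)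
  exact ⟨by linarith, hle⟩

lemma ite_sub_rpow_eq_max_sub_rpow {δ : ℝ} (hδ : δ ≠ 0) (t θ : ℝ) :
    (if θ ≤ t then (t - θ) ^ δ else 0) = max (t - θ) 0 ^ δ := by
  split_ifs with hθ
  · rw [max_eq_left (sub_nonneg.2 hθ)]
  · rw [max_eq_right (sub_nonpos.2 (not_le.1 hθ).le), zero_rpow hδ]

theorem truncated_power_strictly_pos_def (d : ℕ) (hd : 3 ≤ d) (t : ℝ)
    (ht : t ∈ Set.Ioc (0:ℝ) π) (δ : ℝ) (hδ : ((⌈(d : ℝ) / 2⌉ : ℤ) : ℝ) ≤ δ) :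
    StrictPosDefOnSphere d (fun θ => if θ ≤ t then (t - θ) ^ δ else 0) := by
  intro N x hx hinj
  obtain ⟨m, hm⟩ : ∃ m : ℕ, (d + 1) / 2 = m + 2 := ⟨(d + 1) / 2 - 2, by omega⟩
  rw [ceil_natCast_div_two, hm, Int.cast_natCast] at hδ
  have hδ₀ : δ ≠ 0 := (lt_of_lt_of_le (by positivity) hδ).ne'
  obtain ⟨f⟩ : Nonempty (EuclideanSpace ℝ (Fin d) →ₗᵢ[ℝ]
      EuclideanSpace ℝ (Fin (2 + 2 * (m + 1)))) :=
    nonempty_linearIsometry_of_finrank_le (by simp only [finrank_euclideanSpace_fin]; omega)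
  refine .of_dotProduct_mulVec_pos (.ext fun i j => ?_) fun c hc => ?_
  · simp only [Matrix.of_apply, real_inner_comm, star_trivial]
  · simp only [ite_sub_rpow_eq_max_sub_rpow hδ₀]
    rw [star_trivial, dotProduct_mulVec_eq_kernelForm x c fun θ => max (t - θ) 0 ^ δ,
      ← kernelForm_linearIsometry_comp f]
    exact kernelForm_max_sub_rpow_pos finrank_euclideanSpace_fin
      (fun i => (f.norm_map _).trans (hx i)) (f.injective.comp hinj) hc ht hδ
end

section
/- (Pólya criterion, positive definiteness) Let d ∈ ℕ with d ≥ 3 and set λ = ⌈(d-2)/2⌉. Let g: [0,π] → ℝ be λ-times continuously differentiable and suppose that: (i) (-1)^λ g^{(λ)} is convex on [0,π]; (ii) g^{(j)}(π) = 0 for all 0 ≤ j ≤ λ, the left derivative of g^{(λ)} at π equals 0, and the right derivative of g^{(λ)} at 0 exists and is finite. Then g is a positive definite function on the unit sphere S^{d-1}. -/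
/-!
For a measure `μ` on `ℝ^(2k+2)` and the half-spaces `H x = {z | 1 < ⟪z, x⟫}`, the kernel
`μ (H x ∩ H y)` is a Gram matrix of indicator functions in `L²(μ)`. When `μ` has density
`m (‖z‖²)`, polar coordinates in the plane of `x` and `y`, whose angle is `θ`, give
`μ (H x ∩ H y) = 2 ∫ b in θ/2..π/2, Φ (1 / cos² b)` with `Φ q = ∫ r in √q..∞, r M (r²)`, where
`M q` is the integral of `m (q + ‖w‖²)` over `w ∈ ℝ^(2k)`. So the kernel equals `g θ` as soon as
`Φ (1 / cos² b) = -g' (2 b)`, that is, `Φ q = -g' (2 arctan √(q - 1))`.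

Integrating a radial density over two more dimensions takes one more antiderivative in `q`, up to a
factor `-π`. Hence a nonnegative `m` exists if `Φ` has `k + 1` derivatives of alternating signs.
Since `2 arctan √(q - 1)` is a Bernstein function of `q - 1`, this follows from the same property
of `-g'`. A function satisfying the convexity hypothesis with `λ = k` has two derivatives too few;
extended by zero beyond `π`, it is a limit of twice averaged functions that have them.
-/

open MeasureTheory Real Set
open scoped RealInnerProductSpace

/-- `F` is nonnegative on `(a, ∞)` and so are the first `k` of its derivatives with alternating
signs: `k`-times monotone in the sense of Williamson, with `k` classical derivatives, the last one
continuous. The functions `F'` in the recursion are the *negated* derivatives. -/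
def MultiplyMonotone : ℕ → ℝ → (ℝ → ℝ) → Prop
  | 0, a, F => ContinuousOn F (Ioi a) ∧ ∀ x > a, 0 ≤ F x
  | k + 1, a, F => (∀ x > a, 0 ≤ F x) ∧
      ∃ F' : ℝ → ℝ, (∀ x > a, HasDerivAt F (-F' x) x) ∧ MultiplyMonotone k a F'

namespace MultiplyMonotone

variable {k : ℕ} {a : ℝ} {F G : ℝ → ℝ}

theorem nonneg (h : MultiplyMonotone k a F) : ∀ x > a, 0 ≤ F x := by
  cases k with
  | zero => exact h.2
  | succ k => exact h.1

theorem continuousOn (h : MultiplyMonotone k a F) : ContinuousOn F (Ioi a) := by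
  cases k with
  | zero => exact h.1
  | succ k =>
    obtain ⟨-, F', hF, -⟩ := h
    exact fun x hx ↦ (hF x hx).continuousAt.continuousWithinAt

theorem of_succ (h : MultiplyMonotone (k + 1) a F) : MultiplyMonotone k a F := by
  induction k generalizing F with
  | zero => exact ⟨h.continuousOn, h.nonneg⟩
  | succ k ih =>
    obtain ⟨h0, F', hF, h'⟩ := h
    exact ⟨h0, F', hF, ih h'⟩

theorem add (hF : MultiplyMonotone k a F) (hG : MultiplyMonotone k a G) :
    MultiplyMonotone k a (fun x ↦ F x + G x) := by
  induction k generalizing F G with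
  | zero => exact ⟨hF.1.add hG.1, fun x hx ↦ add_nonneg (hF.2 x hx) (hG.2 x hx)⟩
  | succ k ih =>
    obtain ⟨hF0, F', dF, hF'⟩ := hF
    obtain ⟨hG0, G', dG, hG'⟩ := hG
    exact ⟨fun x hx ↦ add_nonneg (hF0 x hx) (hG0 x hx), _,
      fun x hx ↦ ((dF x hx).add (dG x hx)).congr_deriv (by ring), ih hF' hG'⟩

theorem mul (hF : MultiplyMonotone k a F) (hG : MultiplyMonotone k a G) :
    MultiplyMonotone k a (fun x ↦ F x * G x) := by
  induction k generalizing F G with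
  | zero => exact ⟨hF.1.mul hG.1, fun x hx ↦ mul_nonneg (hF.2 x hx) (hG.2 x hx)⟩
  | succ k ih =>
    have hFk := hF.of_succ
    have hGk := hG.of_succ
    obtain ⟨hF0, F', dF, hF'⟩ := hF
    obtain ⟨hG0, G', dG, hG'⟩ := hG
    exact ⟨fun x hx ↦ mul_nonneg (hF0 x hx) (hG0 x hx), _,
      fun x hx ↦ ((dF x hx).mul (dG x hx)).congr_deriv (by ring), (ih hF' hGk).add (ih hFk hG')⟩

theorem const_mul {c : ℝ} (hc : 0 ≤ c) (hF : MultiplyMonotone k a F) :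
    MultiplyMonotone k a (fun x ↦ c * F x) := by
  induction k generalizing F with
  | zero => exact ⟨continuousOn_const.mul hF.1, fun x hx ↦ mul_nonneg hc (hF.2 x hx)⟩
  | succ k ih =>
    obtain ⟨h0, F', dF, hF'⟩ := hF
    exact ⟨fun x hx ↦ mul_nonneg hc (h0 x hx), _,
      fun x hx ↦ ((dF x hx).const_mul c).congr_deriv (by ring), ih hF'⟩

theorem add_const_rpow_neg {c s : ℝ} (hac : 0 ≤ a + c) (hs : 0 ≤ s) :
    MultiplyMonotone k a (fun x ↦ (x + c) ^ (-s)) := by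
  have hpos : ∀ x > a, 0 < x + c := fun x hx ↦ by linarith
  induction k generalizing s with
  | zero =>
    exact ⟨fun x hx ↦ ((continuousAt_id.add continuousAt_const).rpow_const
      (Or.inl (hpos x hx).ne')).continuousWithinAt, fun x hx ↦ rpow_nonneg (hpos x hx).le _⟩
  | succ k ih =>
    refine ⟨fun x hx ↦ rpow_nonneg (hpos x hx).le _, _, fun x hx ↦ ?_,
      (ih (s := s + 1) (by linarith)).const_mul hs⟩
    refine (((hasDerivAt_id x).add_const c).rpow_const
      (p := -s) (Or.inl (hpos x hx).ne')).congr_deriv ?_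
    rw [neg_add', id]
    ring

theorem comp {b : ℝ} {t t' : ℝ → ℝ} (hF : MultiplyMonotone k a F) (ht : MapsTo t (Ioi b) (Ioi a))
    (dt : ∀ x > b, HasDerivAt t (t' x) x) (ht' : ∀ j, MultiplyMonotone j b t') :
    MultiplyMonotone k b (fun x ↦ F (t x)) := by
  induction k generalizing F with
  | zero =>
    exact ⟨hF.1.comp (fun x hx ↦ (dt x hx).continuousAt.continuousWithinAt) ht,
      fun x hx ↦ hF.2 _ (ht hx)⟩
  | succ k ih =>
    obtain ⟨h0, F', dF, hF'⟩ := hF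
    exact ⟨fun x hx ↦ h0 _ (ht hx), _,
      fun x hx ↦ ((dF _ (ht hx)).comp x (dt x hx)).congr_deriv (by ring), (ih hF').mul (ht' k)⟩

theorem comp_two_mul_arctan_sqrt (hF : MultiplyMonotone k 0 F) :
    MultiplyMonotone k 1 (fun q ↦ F (2 * arctan √(q - 1))) := by
  refine hF.comp (t' := fun q ↦ (q + 0) ^ (-1 : ℝ) * (q + -1) ^ (-(1 / 2) : ℝ)) ?_ ?_ fun j ↦
    (add_const_rpow_neg (by norm_num) (by norm_num)).mul
      (add_const_rpow_neg (by norm_num) (by norm_num))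
  · intro q hq
    have : 0 < arctan √(q - 1) := arctan_pos.2 (sqrt_pos.2 (sub_pos.2 hq))
    exact mul_pos two_pos this
  · intro q hq
    have hq0 : q ≠ 0 := by linarith
    have hq1 : 0 < q - 1 := by linarith
    refine ((((hasDerivAt_id q).sub_const 1).sqrt hq1.ne').arctan.const_mul 2).congr_deriv ?_
    rw [id, sq_sqrt hq1.le, add_zero, rpow_neg_one, ← sub_eq_add_neg, rpow_neg hq1.le,
      ← sqrt_eq_rpow, add_sub_cancel]
    field_simp

end MultiplyMonotone

section RadialIntegrals

open Filter Topology ENNReal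

theorem lintegral_Ioi_ofReal_of_hasDerivAt_neg {f f' : ℝ → ℝ} {a : ℝ}
    (hcont : ContinuousWithinAt f (Ici a) a) (df : ∀ x > a, HasDerivAt f (-f' x) x)
    (hf' : ∀ x > a, 0 ≤ f' x) (hlim : Tendsto f atTop (𝓝 0)) :
    ∫⁻ x in Ioi a, .ofReal (f' x) = .ofReal (f a) := by
  have hneg : ∀ x ∈ Ioi a, -f' x ≤ 0 := fun x hx ↦ neg_nonpos.2 (hf' x hx)
  have hintegrable := integrableOn_Ioi_deriv_of_nonpos hcont df hneg hlim
  have hval := integral_Ioi_of_hasDerivAt_of_nonpos hcont df hneg hlim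
  rw [integral_neg, zero_sub, neg_inj] at hval
  rw [← hval, ofReal_integral_eq_lintegral_ofReal (integrable_neg_iff.1 hintegrable)
    (ae_restrict_of_forall_mem measurableSet_Ioi hf')]

theorem lintegral_Ioi_mul_comp_add_sq {F F' : ℝ → ℝ} {a q s : ℝ} (hs : 0 ≤ s) (ha : a < q + s ^ 2)
    (dF : ∀ x > a, HasDerivAt F (-F' x) x) (hF' : ∀ x > a, 0 ≤ F' x)
    (hlim : Tendsto F atTop (𝓝 0)) :
    ∫⁻ r in Ioi s, .ofReal r * .ofReal (F' (q + r ^ 2)) = .ofReal (F (q + s ^ 2) / 2) := by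
  have hgt : ∀ r ≥ s, a < q + r ^ 2 := fun r hr ↦ by nlinarith
  have dF2 : ∀ r ≥ s, HasDerivAt (fun r ↦ F (q + r ^ 2) / 2) (-(r * F' (q + r ^ 2))) r :=
    fun r hr ↦ (((dF _ (hgt r hr)).comp r ((hasDerivAt_pow 2 r).const_add q)).div_const
      2).congr_deriv (by ring)
  have hlim2 : Tendsto (fun r ↦ F (q + r ^ 2) / 2) atTop (𝓝 0) := by
    simpa using (hlim.comp (tendsto_atTop_add_const_left _ q
      (tendsto_pow_atTop two_ne_zero))).div_const 2
  rw [← lintegral_Ioi_ofReal_of_hasDerivAt_neg (dF2 s le_rfl).continuousAt.continuousWithinAt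
    (fun r hr ↦ dF2 r hr.le)
    (fun r hr ↦ mul_nonneg (hs.trans hr.le) (hF' _ (hgt r hr.le))) hlim2]
  exact setLIntegral_congr_fun measurableSet_Ioi fun r hr ↦
    (ofReal_mul (hs.trans hr.out.le)).symm

theorem lintegral_comp_abs (f : ℝ → ℝ≥0∞) : ∫⁻ x, f |x| = 2 * ∫⁻ x in Ioi 0, f x := by
  have hpos : ∫⁻ x in Ioi 0, f |x| = ∫⁻ x in Ioi 0, f x :=
    setLIntegral_congr_fun measurableSet_Ioi fun x hx ↦ by simp only [abs_of_pos hx.out]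
  have hneg : ∫⁻ x in Iic 0, f |x| = ∫⁻ x in Ioi 0, f |x| := by
    rw [← setLIntegral_congr Iio_ae_eq_Iic,
      ← (Measure.measurePreserving_neg volume).setLIntegral_comp_preimage_emb
        (Homeomorph.neg ℝ).measurableEmbedding]
    simp
  rw [← lintegral_add_compl _ measurableSet_Ioi, compl_Ioi, hneg, hpos, two_mul]

theorem lintegral_eq_lintegral_polar {f : ℝ × ℝ → ℝ≥0∞} (hf : Measurable f) :
    ∫⁻ p, f p =
      ∫⁻ b in Ioo (-π) π, ∫⁻ r in Ioi 0, .ofReal r * f (r * cos b, r * sin b) := by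
  rw [← lintegral_comp_polarCoord_symm, polarCoord_target, Measure.volume_eq_prod,
    setLIntegral_prod_symm]
  · rfl
  · refine Measurable.aemeasurable ?_
    simp only [polarCoord_symm_apply]
    fun_prop

theorem lintegral_comp_add_sq_add_sq {φ : ℝ → ℝ≥0∞} (hφ : Measurable φ) (q : ℝ) :
    ∫⁻ p : ℝ × ℝ, φ (q + (p.1 ^ 2 + p.2 ^ 2)) =
      .ofReal (2 * π) * ∫⁻ r in Ioi 0, .ofReal r * φ (q + r ^ 2) := by
  rw [lintegral_eq_lintegral_polar (by fun_prop)]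
  simp only [mul_pow, ← mul_add, cos_sq_add_sin_sq, mul_one]
  rw [lintegral_const, Measure.restrict_apply_univ, volume_Ioo, mul_comm]
  ring_nf

theorem one_lt_and_one_lt_polar_iff {t b r : ℝ} (ht : t ∈ Icc 0 (π / 2)) (hb : b ∈ Ioo (-π) π)
    (hr : 0 < r) :
    (1 < cos t * (r * cos b) + sin t * (r * sin b) ∧
      1 < cos t * (r * cos b) - sin t * (r * sin b)) ↔ 1 < r * cos (|b| + t) := by
  have hsin : 0 ≤ sin t := sin_nonneg_of_mem_Icc ⟨ht.1, by linarith [ht.2, pi_pos]⟩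
  have hmin : r * cos (|b| + t) = cos t * (r * cos b) - |sin t * (r * sin b)| := by
    rw [cos_add, cos_abs, abs_mul, abs_mul, abs_of_nonneg hsin, abs_of_pos hr,
      abs_sin_eq_sin_abs_of_abs_le_pi (abs_lt.2 hb).le]
    ring
  calc _ ↔ |sin t * (r * sin b)| < cos t * (r * cos b) - 1 := by
        rw [abs_lt]
        exact and_congr (by constructor <;> intro h <;> linarith) lt_sub_comm
    _ ↔ _ := by
        rw [hmin]
        exact lt_sub_comm

theorem lintegral_Ioo_comp_abs_add (K : ℝ → ℝ≥0∞) (c t : ℝ) :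
    ∫⁻ b in Ioo (-c) c, K (|b| + t) = 2 * ∫⁻ b in Ioo t (c + t), K b := by
  have hind : ∀ b, (Ioo (-c) c).indicator (fun b ↦ K (|b| + t)) b =
      (Iio c).indicator (fun b ↦ K (b + t)) |b| := fun b ↦ by
    simp only [indicator, mem_Ioo, mem_Iio, abs_lt]
  have hshift := (measurePreserving_add_right volume t).setLIntegral_comp_preimage_emb
    (Homeomorph.addRight t).measurableEmbedding K (Ioo t (c + t))
  rw [preimage_add_const_Ioo, sub_self, add_sub_cancel_right] at hshift
  rw [← lintegral_indicator measurableSet_Ioo, lintegral_congr hind, lintegral_comp_abs,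
    setLIntegral_indicator measurableSet_Iio, Iio_inter_Ioi, hshift]

theorem lintegral_halfPlane_inter_eq_sector {φ : ℝ → ℝ≥0∞} (hφ : Measurable φ) {t : ℝ}
    (ht : t ∈ Icc 0 (π / 2)) :
    ∫⁻ p in {p : ℝ × ℝ | 1 < cos t * p.1 + sin t * p.2 ∧ 1 < cos t * p.1 - sin t * p.2},
        φ (p.1 ^ 2 + p.2 ^ 2) =
      2 * ∫⁻ b in Ioo t (π + t), ∫⁻ r in {r | 1 < r * cos b} ∩ Ioi 0, .ofReal r * φ (r ^ 2) := by
  set S : Set (ℝ × ℝ) := {p | 1 < cos t * p.1 + sin t * p.2 ∧ 1 < cos t * p.1 - sin t * p.2}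
  have hS : MeasurableSet S := measurableSet_setOfPred.2 (by fun_prop)
  have hcone : ∀ b, MeasurableSet {r : ℝ | 1 < r * cos b} := fun b ↦
    measurableSet_lt measurable_const (by fun_prop)
  rw [← lintegral_indicator hS, lintegral_eq_lintegral_polar
    ((by fun_prop : Measurable _).indicator hS), ← lintegral_Ioo_comp_abs_add]
  refine setLIntegral_congr_fun measurableSet_Ioo fun b hb ↦ ?_
  simp only [← setLIntegral_indicator (hcone _)]
  refine setLIntegral_congr_fun measurableSet_Ioi fun r hr ↦ ?_
  simp only [S, indicator, mem_ofPred_eq, one_lt_and_one_lt_polar_iff ht hb hr, mul_pow, ← mul_add,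
    cos_sq_add_sin_sq, mul_one, mul_ite, mul_zero]

theorem lintegral_halfPlane_inter {φ : ℝ → ℝ≥0∞} (hφ : Measurable φ) {t : ℝ}
    (ht : t ∈ Icc 0 (π / 2)) :
    ∫⁻ p in {p : ℝ × ℝ | 1 < cos t * p.1 + sin t * p.2 ∧ 1 < cos t * p.1 - sin t * p.2},
        φ (p.1 ^ 2 + p.2 ^ 2) =
      2 * ∫⁻ b in Ioo t (π / 2), ∫⁻ r in Ioi (1 / cos b), .ofReal r * φ (r ^ 2) := by
  have hsector : ∀ b ∈ Ioo t (π + t),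
      ∫⁻ r in {r | 1 < r * cos b} ∩ Ioi 0, .ofReal r * φ (r ^ 2) =
        (Iio (π / 2)).indicator
          (fun b ↦ ∫⁻ r in Ioi (1 / cos b), .ofReal r * φ (r ^ 2)) b := fun b hb ↦ by
    rcases lt_or_ge b (π / 2) with hlt | hge
    · have hcos : 0 < cos b := cos_pos_of_mem_Ioo ⟨by linarith [hb.1, ht.1, pi_pos], hlt⟩
      have hray : {r | 1 < r * cos b} ∩ Ioi 0 = Ioi (1 / cos b) := by
        ext r
        rw [mem_Ioi, div_lt_iff₀ hcos]
        exact and_iff_left_of_imp fun h ↦ pos_of_mul_pos_left (one_pos.trans h.out) hcos.le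
      rw [indicator_of_mem (mem_Iio.2 hlt), hray]
    · have hcos : cos b ≤ 0 := cos_nonpos_of_pi_div_two_le_of_le hge (by linarith [hb.2, ht.2])
      have hempty : {r | 1 < r * cos b} ∩ Ioi 0 = ∅ :=
        eq_empty_of_forall_notMem fun r ⟨h, hr⟩ ↦ by
          linarith [h.out, mul_nonpos_of_nonneg_of_nonpos hr.out.le hcos]
      rw [indicator_of_notMem (notMem_Iio.2 hge), hempty, setLIntegral_empty]
  rw [lintegral_halfPlane_inter_eq_sector hφ ht, setLIntegral_congr_fun measurableSet_Ioo hsector,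
    setLIntegral_indicator measurableSet_Iio, inter_comm, Ioo_inter_Iio,
    min_eq_right (by linarith [ht.1, pi_pos])]

end RadialIntegrals

section Splitting

variable {E : Type*} [NormedAddCommGroup E] [InnerProductSpace ℝ E] [FiniteDimensional ℝ E]

theorem exists_orthonormalBasis_smul_eq {ι : Type*} [Fintype ι] {u : ι → E}
    (card_ι : Module.finrank ℝ E = Fintype.card ι) (hu : Pairwise fun i j ↦ ⟪u i, u j⟫ = 0) :
    ∃ b : OrthonormalBasis ι ℝ E, ∀ i, u i = ‖u i‖ • b i := by
  have horth : Orthonormal ℝ ({i | u i ≠ 0}.domRestrict fun i ↦ ‖u i‖⁻¹ • u i) := by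
    refine ⟨fun i ↦ norm_smul_inv_norm (𝕜 := ℝ) i.2, fun i j hij ↦ ?_⟩
    simp only [domRestrict_apply, real_inner_smul_left, real_inner_smul_right,
      hu (Subtype.coe_ne_coe.2 hij), mul_zero]
  obtain ⟨b, hb⟩ := horth.exists_orthonormalBasis_extension_of_card_eq card_ι
  refine ⟨b, fun i ↦ ?_⟩
  by_cases hi : u i = 0
  · simp [hi]
  · rw [hb i hi, smul_inv_smul₀ (norm_ne_zero_iff.2 hi)]

variable [MeasurableSpace E] [BorelSpace E]

theorem exists_measurePreserving_splitting {n : ℕ} (b : OrthonormalBasis (Fin 2 ⊕ Fin n) ℝ E) :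
    ∃ T : E → (ℝ × ℝ) × EuclideanSpace ℝ (Fin n), MeasurePreserving T ∧ ∀ z,
      (T z).1 = (⟪z, b (.inl 0)⟫, ⟪z, b (.inl 1)⟫) ∧
        ‖z‖ ^ 2 = (T z).1.1 ^ 2 + (T z).1.2 ^ 2 + ‖(T z).2‖ ^ 2 := by
  have hT := ((volume_preserving_finTwoArrow ℝ).prod (PiLp.volume_preserving_toLp (Fin n))).comp
    ((volume_measurePreserving_sumPiEquivProdPi fun _ : Fin 2 ⊕ Fin n ↦ ℝ).comp
      ((PiLp.volume_preserving_ofLp _).comp b.measurePreserving_repr))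
  refine ⟨_, hT, fun z ↦ ⟨?_, ?_⟩⟩
  · rw [real_inner_comm, ← b.repr_apply_apply, real_inner_comm, ← b.repr_apply_apply]
    rfl
  · rw [← b.sum_sq_norm_inner_right z, EuclideanSpace.norm_sq_eq, Fintype.sum_sum_type,
      Fin.sum_univ_two]
    simp only [← b.repr_apply_apply, norm_eq_abs, sq_abs]
    rfl

end Splitting

section HalfSpaceKernel

open Filter Topology ENNReal

theorem eq_zero_of_hasDerivAt_neg {F F' : ℝ → ℝ} {x : ℝ} (dF : HasDerivAt F (-F' x) x)
    (hF : F =ᶠ[𝓝 x] 0) : F' x = 0 :=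
  neg_eq_zero.1 (dF.unique ((hasDerivAt_const x 0).congr_of_eventuallyEq hF))

theorem eventuallyEq_zero_of_hasDerivAt_neg {F F' : ℝ → ℝ} {a : ℝ}
    (dF : ∀ x > a, HasDerivAt F (-F' x) x) (hF : F =ᶠ[atTop] 0) : F' =ᶠ[atTop] 0 := by
  obtain ⟨R, hR⟩ := eventually_atTop.1 hF
  filter_upwards [eventually_gt_atTop a, eventually_gt_atTop R] with x hxa hxR
  exact eq_zero_of_hasDerivAt_neg (dF x hxa)
    (eventually_of_mem (Ioi_mem_nhds hxR) fun y hy ↦ hR y hy.out.le)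

theorem measurable_lintegral_comp_add_norm_sq {V : Type*} [NormedAddCommGroup V]
    [MeasurableSpace V] [OpensMeasurableSpace V] {μ : Measure V} [SFinite μ] {m : ℝ → ℝ≥0∞}
    (hm : Measurable m) : Measurable fun q ↦ ∫⁻ w, m (q + ‖w‖ ^ 2) ∂μ :=
  Measurable.lintegral_prod_right' (f := fun p : ℝ × V ↦ m (p.1 + ‖p.2‖ ^ 2)) (by fun_prop)

theorem lintegral_comp_add_norm_sq {E : Type*} [NormedAddCommGroup E] [InnerProductSpace ℝ E]
    [FiniteDimensional ℝ E] [MeasurableSpace E] [BorelSpace E] {n : ℕ}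
    (hE : Module.finrank ℝ E = 2 + n) {m : ℝ → ℝ≥0∞} (hm : Measurable m) (q : ℝ) :
    ∫⁻ z : E, m (q + ‖z‖ ^ 2) = .ofReal (2 * π) *
      ∫⁻ r in Ioi 0, .ofReal r * ∫⁻ w : EuclideanSpace ℝ (Fin n), m (q + r ^ 2 + ‖w‖ ^ 2) := by
  obtain ⟨T, hT, hTz⟩ := exists_measurePreserving_splitting
    ((stdOrthonormalBasis ℝ E).reindex ((finCongr hE).trans finSumFinEquiv.symm))
  rw [← lintegral_comp_add_sq_add_sq (measurable_lintegral_comp_add_norm_sq hm)]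
  simp only [(hTz _).2, ← add_assoc]
  rw [hT.lintegral_comp (f := fun v ↦ m (q + v.1.1 ^ 2 + v.1.2 ^ 2 + ‖v.2‖ ^ 2)) (by fun_prop),
    Measure.volume_eq_prod, lintegral_prod _ (by fun_prop)]

theorem MultiplyMonotone.exists_lintegral_eq {k : ℕ} {a : ℝ} {F : ℝ → ℝ}
    (hF : MultiplyMonotone k a F) (hF0 : F =ᶠ[atTop] 0) :
    ∃ m : ℝ → ℝ≥0∞, Measurable m ∧ ∀ q > a,
      ∫⁻ w : EuclideanSpace ℝ (Fin (2 * k)), m (q + ‖w‖ ^ 2) = .ofReal (F q) := by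
  induction k generalizing F with
  | zero =>
    classical
    refine ⟨fun q ↦ .ofReal ((Ioi a).piecewise F 0 q),
      (hF.1.measurable_piecewise continuousOn_const measurableSet_Ioi).ennreal_ofReal,
      fun q hq ↦ ?_⟩
    dsimp only
    rw [mul_zero, volume_euclideanSpace_eq_dirac, lintegral_dirac, norm_zero, zero_pow two_ne_zero,
      add_zero, piecewise_eq_of_mem _ _ _ (mem_Ioi.2 hq)]
  | succ k ih =>
    obtain ⟨-, F', dF, hF'⟩ := hF
    have hF'0 : (fun x ↦ π⁻¹ * F' x) =ᶠ[atTop] 0 :=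
      (eventuallyEq_zero_of_hasDerivAt_neg dF hF0).mono fun x hx ↦ by simp [hx]
    obtain ⟨m, hm, hmF⟩ := ih (hF'.const_mul (inv_nonneg.2 pi_pos.le)) hF'0
    refine ⟨m, hm, fun q hq ↦ ?_⟩
    calc ∫⁻ w, m (q + ‖w‖ ^ 2)
      _ = .ofReal (2 * π) * ∫⁻ r in Ioi 0, .ofReal r *
            ∫⁻ w : EuclideanSpace ℝ (Fin (2 * k)), m (q + r ^ 2 + ‖w‖ ^ 2) :=
        lintegral_comp_add_norm_sq (by rw [finrank_euclideanSpace_fin]; ring) hm q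
      _ = .ofReal (2 * π) * ∫⁻ r in Ioi 0, .ofReal r * .ofReal (π⁻¹ * F' (q + r ^ 2)) := by
        congr 1
        refine setLIntegral_congr_fun measurableSet_Ioi fun r _ ↦ ?_
        simp only [hmF (q + r ^ 2) (by nlinarith)]
      _ = .ofReal (2 * π) * .ofReal (π⁻¹ * F q / 2) := by
        rw [lintegral_Ioi_mul_comp_add_sq (F := fun x ↦ π⁻¹ * F x) le_rfl (by simpa using hq)
          (fun x hx ↦ ((dF x hx).const_mul π⁻¹).congr_deriv (by ring))
          (hF'.const_mul (inv_nonneg.2 pi_pos.le)).nonneg]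
        · simp
        · exact tendsto_const_nhds.congr' (hF0.mono fun x hx ↦ by simp [hx])
      _ = .ofReal (F q) := by
        rw [← ofReal_mul (by positivity)]
        congr 1
        field_simp

variable {E : Type*} [NormedAddCommGroup E] [InnerProductSpace ℝ E]

theorem norm_add_eq_two_mul_cos {x y : E} (hx : ‖x‖ = 1) (hy : ‖y‖ = 1) :
    ‖x + y‖ = 2 * cos (arccos ⟪x, y⟫ / 2) := by
  have habs : |⟪x, y⟫| ≤ 1 := by simpa [hx, hy] using abs_real_inner_le_norm x y
  have hcos : 0 ≤ cos (arccos ⟪x, y⟫ / 2) := cos_nonneg_of_mem_Icc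
    ⟨by linarith [arccos_nonneg ⟪x, y⟫, pi_pos], by linarith [arccos_le_pi ⟪x, y⟫]⟩
  rw [← sq_eq_sq₀ (norm_nonneg _) (by positivity), norm_add_sq_real, hx, hy, mul_pow, cos_sq,
    mul_div_cancel₀ _ two_ne_zero, cos_arccos (abs_le.1 habs).1 (abs_le.1 habs).2]
  ring

theorem norm_sub_eq_two_mul_sin {x y : E} (hx : ‖x‖ = 1) (hy : ‖y‖ = 1) :
    ‖x - y‖ = 2 * sin (arccos ⟪x, y⟫ / 2) := by
  have habs : |⟪x, y⟫| ≤ 1 := by simpa [hx, hy] using abs_real_inner_le_norm x y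
  have hsin : 0 ≤ sin (arccos ⟪x, y⟫ / 2) := sin_nonneg_of_mem_Icc
    ⟨by linarith [arccos_nonneg ⟪x, y⟫], by linarith [arccos_le_pi ⟪x, y⟫, pi_pos]⟩
  rw [← sq_eq_sq₀ (norm_nonneg _) (by positivity), norm_sub_sq_real, hx, hy, mul_pow, sin_sq,
    cos_sq, mul_div_cancel₀ _ two_ne_zero, cos_arccos (abs_le.1 habs).1 (abs_le.1 habs).2]
  ring

variable [FiniteDimensional ℝ E]

theorem exists_orthonormalBasis_half_angle {n : ℕ} (hE : Module.finrank ℝ E = 2 + n) {x y : E}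
    (hx : ‖x‖ = 1) (hy : ‖y‖ = 1) :
    ∃ b : OrthonormalBasis (Fin 2 ⊕ Fin n) ℝ E,
      x = cos (arccos ⟪x, y⟫ / 2) • b (.inl 0) + sin (arccos ⟪x, y⟫ / 2) • b (.inl 1) ∧
      y = cos (arccos ⟪x, y⟫ / 2) • b (.inl 0) - sin (arccos ⟪x, y⟫ / 2) • b (.inl 1) := by
  have horth : ⟪x + y, x - y⟫ = 0 := real_inner_add_sub_eq_zero_iff x y |>.2 (hx.trans hy.symm)
  obtain ⟨b, hb⟩ := exists_orthonormalBasis_smul_eq (ι := Fin 2 ⊕ Fin n)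
    (u := Sum.elim ![x + y, x - y] 0) (by simp [hE]) (by
      rintro (i | i) (j | j) hij
      · fin_cases i <;> fin_cases j <;> simp_all [real_inner_comm]
      all_goals simp)
  have hadd : x + y = (2 * cos (arccos ⟪x, y⟫ / 2)) • b (.inl 0) := by
    simpa [norm_add_eq_two_mul_cos hx hy] using hb (.inl 0)
  have hsub : x - y = (2 * sin (arccos ⟪x, y⟫ / 2)) • b (.inl 1) := by
    simpa [norm_sub_eq_two_mul_sin hx hy] using hb (.inl 1)
  refine ⟨b, smul_right_injective E (two_ne_zero' ℝ) ?_, smul_right_injective E (two_ne_zero' ℝ) ?_⟩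
  · simp only [smul_add, smul_smul, ← hadd, ← hsub, two_smul]
    abel
  · simp only [smul_sub, smul_smul, ← hadd, ← hsub, two_smul]
    abel

variable [MeasurableSpace E] [BorelSpace E]

theorem lintegral_halfSpace_inter {n : ℕ} (hE : Module.finrank ℝ E = 2 + n) {m : ℝ → ℝ≥0∞}
    (hm : Measurable m) {x y : E} (hx : ‖x‖ = 1) (hy : ‖y‖ = 1) :
    ∫⁻ z in {z | 1 < ⟪z, x⟫} ∩ {z | 1 < ⟪z, y⟫}, m (‖z‖ ^ 2) =
      2 * ∫⁻ b in Ioo (arccos ⟪x, y⟫ / 2) (π / 2), ∫⁻ r in Ioi (1 / cos b),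
        .ofReal r * ∫⁻ w : EuclideanSpace ℝ (Fin n), m (r ^ 2 + ‖w‖ ^ 2) := by
  obtain ⟨b, hxb, hyb⟩ := exists_orthonormalBasis_half_angle hE hx hy
  obtain ⟨T, hT, hTz⟩ := exists_measurePreserving_splitting b
  have ht : arccos ⟪x, y⟫ / 2 ∈ Icc 0 (π / 2) :=
    ⟨by linarith [arccos_nonneg ⟪x, y⟫], by linarith [arccos_le_pi ⟪x, y⟫]⟩
  set t := arccos ⟪x, y⟫ / 2
  have hφ : Measurable fun q ↦ ∫⁻ w : EuclideanSpace ℝ (Fin n), m (q + ‖w‖ ^ 2) :=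
    measurable_lintegral_comp_add_norm_sq hm
  let S : Set (ℝ × ℝ) := {p | 1 < cos t * p.1 + sin t * p.2 ∧ 1 < cos t * p.1 - sin t * p.2}
  have hS : MeasurableSet S := measurableSet_setOfPred.2 (by fun_prop)
  have hpre : {z | 1 < ⟪z, x⟫} ∩ {z | 1 < ⟪z, y⟫} = T ⁻¹' (S ×ˢ univ) := by
    ext z
    rw [hxb, hyb]
    simp [S, (hTz z).1, inner_add_right, inner_sub_right, inner_smul_right]
  rw [← lintegral_halfPlane_inter hφ ht, hpre]
  simp only [(hTz _).2]
  rw [hT.setLIntegral_comp_preimage (f := fun v ↦ m (v.1.1 ^ 2 + v.1.2 ^ 2 + ‖v.2‖ ^ 2))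
    (hS.prod .univ) (by fun_prop), Measure.volume_eq_prod, setLIntegral_prod _ (by fun_prop)]
  simp [S]

theorem two_mul_arctan_sqrt_inv_cos_sq_sub_one {b : ℝ} (hb : b ∈ Ioo 0 (π / 2)) :
    2 * arctan √((1 / cos b) ^ 2 - 1) = 2 * b := by
  have hcos : cos b ≠ 0 := (cos_pos_of_mem_Ioo ⟨by linarith [hb.1, pi_pos], hb.2⟩).ne'
  have htan : (1 / cos b) ^ 2 - 1 = tan b ^ 2 := by
    rw [one_div, inv_pow, ← inv_one_add_tan_sq hcos, inv_inv, add_sub_cancel_left]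
  rw [htan, sqrt_sq (tan_pos_of_pos_of_lt_pi_div_two hb.1 hb.2).le,
    arctan_tan (by linarith [hb.1, pi_pos]) hb.2]

theorem eventually_lt_two_mul_arctan_sqrt {ρ : ℝ} (hρ : ρ < π) :
    ∀ᶠ q in atTop, ρ < 2 * arctan √(q - 1) := by
  have hlim : Tendsto (fun q ↦ 2 * arctan √(q - 1)) atTop (𝓝 (2 * (π / 2))) :=
    ((tendsto_nhds_of_tendsto_nhdsWithin tendsto_arctan_atTop).comp
      (tendsto_sqrt_atTop.comp (tendsto_atTop_add_const_right _ (-1) tendsto_id))).const_mul 2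
  exact hlim.eventually_const_lt (by linarith)

theorem lintegral_Ioo_comp_two_mul {G n : ℝ → ℝ} {θ ρ : ℝ} (hθ : 0 ≤ θ)
    (hcont : ContinuousOn G (Ici 0)) (dG : ∀ x > 0, HasDerivAt G (-n x) x) (hn : ∀ x > 0, 0 ≤ n x)
    (hρ : ρ < π) (hG : ∀ x > ρ, G x = 0) :
    ∫⁻ b in Ioo (θ / 2) (π / 2), .ofReal (2 * n (2 * b)) = .ofReal (G θ) := by
  have hcont2 : ContinuousWithinAt (fun b ↦ G (2 * b)) (Ici (θ / 2)) (θ / 2) :=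
    (hcont.comp (t := Ici 0) (by fun_prop) fun b hb ↦ mul_nonneg two_pos.le hb.out).mono
      (Ici_subset_Ici.2 (by linarith)) _ self_mem_Ici
  have dG2 : ∀ b > θ / 2, HasDerivAt (fun b ↦ G (2 * b)) (-(2 * n (2 * b))) b := fun b hb ↦
    ((dG (2 * b) (by linarith)).comp b (hasDerivAt_const_mul 2)).congr_deriv (by ring)
  have hlim : Tendsto (fun b ↦ G (2 * b)) atTop (𝓝 0) :=
    tendsto_const_nhds.congr' ((eventually_gt_atTop (max 0 ρ)).mono fun b hb ↦
      (hG _ (by linarith [max_lt_iff.1 hb])).symm)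
  have hvanish : ∀ b ∈ Ioi (θ / 2), ENNReal.ofReal (2 * n (2 * b)) =
      (Iio (π / 2)).indicator (fun b ↦ .ofReal (2 * n (2 * b))) b := fun b hb ↦ by
    rw [indicator_apply, eq_comm, ite_eq_left_iff]
    intro hb'
    have hρb : ρ < 2 * b := by linarith [notMem_Iio.1 hb']
    rw [eq_zero_of_hasDerivAt_neg (dG (2 * b) (by linarith [hb.out]))
      (eventually_of_mem (Ioi_mem_nhds hρb) hG), mul_zero, ofReal_zero]
  calc ∫⁻ b in Ioo (θ / 2) (π / 2), .ofReal (2 * n (2 * b))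
    _ = ∫⁻ b in Ioi (θ / 2), .ofReal (2 * n (2 * b)) := by
      rw [setLIntegral_congr_fun measurableSet_Ioi hvanish,
        setLIntegral_indicator measurableSet_Iio, inter_comm, Ioi_inter_Iio]
    _ = .ofReal (G (2 * (θ / 2))) := lintegral_Ioi_ofReal_of_hasDerivAt_neg hcont2 dG2
      (fun b hb ↦ mul_nonneg two_pos.le (hn _ (by linarith))) hlim
    _ = .ofReal (G θ) := by rw [mul_div_cancel₀ _ two_ne_zero]

theorem two_mul_lintegral_Ioi_one_div_cos {k : ℕ} {F F' : ℝ → ℝ} {m : ℝ → ℝ≥0∞}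
    (dF : ∀ q > 1, HasDerivAt F (-F' q) q) (hF' : ∀ q > 1, 0 ≤ F' q) (hF : F =ᶠ[atTop] 0)
    (hm : ∀ q > 1, ∫⁻ w : EuclideanSpace ℝ (Fin k), m (q + ‖w‖ ^ 2) = .ofReal (F' q))
    {b : ℝ} (hb : b ∈ Ioo 0 (π / 2)) :
    2 * ∫⁻ r in Ioi (1 / cos b), .ofReal r * ∫⁻ w : EuclideanSpace ℝ (Fin k), m (r ^ 2 + ‖w‖ ^ 2) =
      .ofReal (F ((1 / cos b) ^ 2)) := by
  have hcos : 0 < cos b := cos_pos_of_mem_Ioo ⟨by linarith [hb.1, pi_pos], hb.2⟩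
  have hone : 1 < 1 / cos b := (one_lt_div hcos).2 <|
    cos_zero ▸ cos_lt_cos_of_nonneg_of_le_pi_div_two le_rfl hb.2.le hb.1
  calc 2 * ∫⁻ r in Ioi (1 / cos b), .ofReal r * ∫⁻ w : EuclideanSpace ℝ _, m (r ^ 2 + ‖w‖ ^ 2)
    _ = 2 * ∫⁻ r in Ioi (1 / cos b), .ofReal r * .ofReal (F' (0 + r ^ 2)) := by
      congr 1
      refine setLIntegral_congr_fun measurableSet_Ioi fun r hr ↦ ?_
      simp only [hm (r ^ 2) (one_lt_pow₀ (hone.trans hr) two_ne_zero), zero_add]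
    _ = 2 * .ofReal (F (0 + (1 / cos b) ^ 2) / 2) := by
      rw [lintegral_Ioi_mul_comp_add_sq (by positivity)
        (by simpa only [zero_add] using one_lt_pow₀ hone two_ne_zero) dF hF'
        (tendsto_const_nhds.congr' hF.symm)]
    _ = .ofReal (F ((1 / cos b) ^ 2)) := by
      rw [zero_add, ← ofReal_ofNat 2, ← ofReal_mul two_pos.le, mul_div_cancel₀ _ two_ne_zero]

theorem exists_measure_halfSpace_inter {k : ℕ} (hE : Module.finrank ℝ E = 2 + 2 * k) {G : ℝ → ℝ}
    {ρ : ℝ} (hG : MultiplyMonotone (k + 2) 0 G) (hcont : ContinuousOn G (Ici 0)) (hρ : ρ < π)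
    (hGρ : ∀ x > ρ, G x = 0) :
    ∃ μ : Measure E, ∀ x y : E, ‖x‖ = 1 → ‖y‖ = 1 →
      μ ({z | 1 < ⟪z, x⟫} ∩ {z | 1 < ⟪z, y⟫}) = .ofReal (G (arccos ⟪x, y⟫)) := by
  obtain ⟨-, n, dG, hn⟩ := hG
  let F : ℝ → ℝ := fun q ↦ 2 * n (2 * arctan √(q - 1))
  have hF0 : F =ᶠ[atTop] 0 := by
    filter_upwards [eventually_lt_two_mul_arctan_sqrt (max_lt pi_pos hρ)] with q hq
    obtain ⟨hq0, hqρ⟩ := max_lt_iff.1 hq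
    simp only [F, Pi.zero_apply, eq_zero_of_hasDerivAt_neg (dG _ hq0)
      (eventually_of_mem (Ioi_mem_nhds hqρ) hGρ), mul_zero]
  obtain ⟨-, F', dF, hF'⟩ := hn.comp_two_mul_arctan_sqrt.const_mul two_pos.le
  obtain ⟨m, hm, hmF'⟩ := hF'.exists_lintegral_eq (eventuallyEq_zero_of_hasDerivAt_neg dF hF0)
  refine ⟨volume.withDensity fun z ↦ m (‖z‖ ^ 2), fun x y hx hy ↦ ?_⟩
  have hmeas : ∀ x : E, MeasurableSet {z : E | 1 < ⟪z, x⟫} := fun x ↦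
    measurableSet_lt measurable_const (by fun_prop)
  rw [withDensity_apply _ ((hmeas x).inter (hmeas y)), lintegral_halfSpace_inter hE hm hx hy,
    ← lintegral_Ioo_comp_two_mul (arccos_nonneg _) hcont dG hn.nonneg hρ hGρ,
    ← lintegral_const_mul' _ _ ofNat_ne_top]
  refine setLIntegral_congr_fun measurableSet_Ioo fun b hb ↦ ?_
  have hb' : b ∈ Ioo 0 (π / 2) := ⟨by linarith [arccos_nonneg ⟪x, y⟫, hb.1], hb.2⟩
  simp only [two_mul_lintegral_Ioi_one_div_cos dF hF'.nonneg hF0 hmF' hb',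
    two_mul_arctan_sqrt_inv_cos_sq_sub_one hb']

end HalfSpaceKernel

section PositiveSemidefinite

open Filter Topology

theorem isClosed_setOf_posSemidef {n : Type*} [Finite n] :
    IsClosed {M : Matrix n n ℝ | M.PosSemidef} := by
  cases nonempty_fintype n
  have hquad : ∀ x : n → ℝ, IsClosed {M : Matrix n n ℝ | 0 ≤ star x ⬝ᵥ M.mulVec x} := fun x ↦
    isClosed_le continuous_const (by fun_prop)
  have hherm : IsClosed {M : Matrix n n ℝ | M.IsHermitian} :=
    isClosed_eq continuous_id.matrix_conjTranspose continuous_id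
  simpa only [Matrix.posSemidef_iff_dotProduct_mulVec, inter_def, iInter_ofPred, mem_ofPred_eq]
    using hherm.inter (isClosed_iInter hquad)

theorem exists_linearIsometry_euclideanSpace {d e : ℕ} (hde : d ≤ e) :
    Nonempty (EuclideanSpace ℝ (Fin d) →ₗᵢ[ℝ] EuclideanSpace ℝ (Fin e)) := by
  let b := EuclideanSpace.basisFun (Fin d) ℝ
  let c := EuclideanSpace.basisFun (Fin e) ℝ
  refine ⟨(b.toBasis.constr ℝ (c ∘ Fin.castLE hde)).isometryOfOrthonormal (v := b.toBasis)
    (by simp [b.orthonormal]) ?_⟩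
  have : b.toBasis.constr ℝ (c ∘ Fin.castLE hde) ∘ b.toBasis = c ∘ Fin.castLE hde :=
    funext (b.toBasis.constr_basis ℝ _)
  rw [this]
  exact c.orthonormal.comp _ (Fin.castLE_injective hde)

namespace PosDefOnSphere

variable {d e : ℕ} {g : ℝ → ℝ}

theorem mono (hde : d ≤ e) (hg : PosDefOnSphere e g) : PosDefOnSphere d g := by
  obtain ⟨T⟩ := exists_linearIsometry_euclideanSpace hde
  intro N x hx hinj
  simpa only [Function.comp_apply, T.inner_map_map] using
    hg N (T ∘ x) (fun i ↦ (T.norm_map _).trans (hx i)) (T.injective.comp hinj)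

theorem of_tendsto {ι : Type*} {l : Filter ι} [l.NeBot] {G : ι → ℝ → ℝ}
    (hG : ∀ᶠ i in l, PosDefOnSphere d (G i))
    (hlim : ∀ θ ∈ Icc 0 π, Tendsto (fun i ↦ G i θ) l (𝓝 (g θ))) : PosDefOnSphere d g := by
  intro N x hx hinj
  refine isClosed_setOf_posSemidef.mem_of_tendsto
    (tendsto_pi_nhds.2 fun i ↦ tendsto_pi_nhds.2 fun j ↦ ?_)
    (hG.mono fun i hi ↦ hi N x hx hinj)
  exact hlim _ ⟨arccos_nonneg _, arccos_le_pi _⟩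

theorem congr {f : ℝ → ℝ} (hf : PosDefOnSphere d f) (hfg : EqOn f g (Icc 0 π)) :
    PosDefOnSphere d g :=
  of_tendsto (l := pure ()) (.of_forall fun _ ↦ hf) fun _ hθ ↦ hfg hθ ▸ tendsto_const_nhds

end PosDefOnSphere

theorem MultiplyMonotone.posDefOnSphere {k : ℕ} {G : ℝ → ℝ} {ρ : ℝ}
    (hG : MultiplyMonotone (k + 2) 0 G) (hcont : ContinuousOn G (Ici 0)) (hρ : ρ < π)
    (hGρ : ∀ x > ρ, G x = 0) : PosDefOnSphere (2 * k + 2) G := by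
  obtain ⟨μ, hμ⟩ := exists_measure_halfSpace_inter (E := EuclideanSpace ℝ (Fin (2 * k + 2)))
    (by rw [finrank_euclideanSpace_fin, add_comm]) hG hcont hρ hGρ
  have hG0 : ∀ θ ≥ 0, 0 ≤ G θ := fun θ hθ ↦ continuousWithinAt_const.closure_le
    (by rwa [closure_Ioi]) ((hcont θ hθ).mono Ioi_subset_Ici_self) hG.nonneg
  intro N x hx _
  have hreal : ∀ i j, μ.real ({z | 1 < ⟪z, x i⟫} ∩ {z | 1 < ⟪z, x j⟫}) =
      G (arccos ⟪x i, x j⟫) := fun i j ↦ by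
    rw [measureReal_def, hμ _ _ (hx i) (hx j), ENNReal.toReal_ofReal (hG0 _ (arccos_nonneg _))]
  simp only [← hreal]
  refine posSemidef_matrix_measure_inter
    (fun i ↦ measurableSet_lt measurable_const (by fun_prop)) fun i ↦ ?_
  rw [← inter_self {z | 1 < ⟪z, x i⟫}, hμ _ _ (hx i) (hx i)]
  exact ENNReal.ofReal_ne_top

end PositiveSemidefinite

/-- The mean of `F` over `[x + e, x + 2 e]`, written as an integral over `[1, 2]` so that `e = 0`
gives back `F x`. It smooths a multiply monotone function near `0`; the interval stays away from
`x` so that the support of `F` in `(0, ∞)` shrinks by `e`. -/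
noncomputable def forwardMean (e : ℝ) (F : ℝ → ℝ) (x : ℝ) : ℝ :=
  ∫ s in (1 : ℝ)..2, F (x + e * s)

section ForwardMean

open Filter Topology

variable {e : ℝ} {F F' : ℝ → ℝ}

theorem forwardMean_zero (F : ℝ → ℝ) (x : ℝ) : forwardMean 0 F x = F x := by
  simp [forwardMean, show (2 : ℝ) - 1 = 1 by norm_num]

theorem forwardMean_eq_inv_mul (he : e ≠ 0) (F : ℝ → ℝ) (x : ℝ) :
    forwardMean e F x = e⁻¹ * ∫ y in (x + e)..(x + 2 * e), F y := by
  rw [forwardMean, intervalIntegral.integral_comp_add_mul _ he, mul_one, mul_comm e 2, smul_eq_mul]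

theorem continuous_forwardMean_uncurry {F : ℝ → ℝ → ℝ} (hF : Continuous F.uncurry) :
    Continuous fun p : ℝ × ℝ ↦ forwardMean p.1 (F p.1) p.2 :=
  intervalIntegral.continuous_parametric_intervalIntegral_of_continuous'
    (f := fun (p : ℝ × ℝ) s ↦ F p.1 (p.2 + p.1 * s))
    (hF.comp (f := fun q : (ℝ × ℝ) × ℝ ↦ (q.1.1, q.1.2 + q.1.1 * q.2)) (by fun_prop)) 1 2

theorem continuous_forwardMean (hF : Continuous F) : Continuous (forwardMean e F) :=
  (continuous_forwardMean_uncurry (F := fun _ ↦ F) (hF.comp continuous_snd)).comp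
    (Continuous.prodMk_right e)

theorem tendsto_forwardMean_forwardMean (hF : Continuous F) (x : ℝ) :
    Tendsto (fun e ↦ forwardMean e (forwardMean e F) x) (𝓝 0) (𝓝 (F x)) := by
  have hcont : Continuous fun e ↦ forwardMean e (forwardMean e F) x :=
    (continuous_forwardMean_uncurry (F := fun e ↦ forwardMean e F)
      (continuous_forwardMean_uncurry (F := fun _ ↦ F) (hF.comp continuous_snd))).comp
        (Continuous.prodMk_left x)
  simpa only [forwardMean_zero] using hcont.tendsto 0

theorem forwardMean_nonneg {x : ℝ} (hF : ∀ y ≥ x + e, 0 ≤ F y) (he : 0 ≤ e) :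
    0 ≤ forwardMean e F x :=
  intervalIntegral.integral_nonneg one_le_two fun s hs ↦ hF _ (by nlinarith [hs.1])

theorem forwardMean_eq_zero {x : ℝ} (hF : ∀ y ≥ x + e, F y = 0) (he : 0 ≤ e) :
    forwardMean e F x = 0 := by
  rw [forwardMean, intervalIntegral.integral_congr (g := fun _ ↦ 0) fun s hs ↦ ?_,
    intervalIntegral.integral_zero]
  rw [uIcc_of_le one_le_two] at hs
  exact hF _ (by nlinarith [hs.1])

theorem antitone_forwardMean (hF : Continuous F) (hanti : Antitone F) :
    Antitone (forwardMean e F) := fun x y hxy ↦ by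
  refine intervalIntegral.integral_mono_on one_le_two (Continuous.intervalIntegrable ?_ _ _)
    (Continuous.intervalIntegrable ?_ _ _) fun s _ ↦ hanti (by gcongr) <;> fun_prop

theorem hasDerivAt_forwardMean (hF : Continuous F) (he : e ≠ 0) (x : ℝ) :
    HasDerivAt (forwardMean e F) (-((F (x + e) - F (x + 2 * e)) / e)) x := by
  have hintegrable : ∀ a b, IntervalIntegrable F volume a b := hF.intervalIntegrable
  have hprim : ∀ c, HasDerivAt (fun x ↦ ∫ y in 0..x + c, F y) (F (x + c)) x := fun c ↦
    (hF.integral_hasStrictDerivAt 0 (x + c)).hasDerivAt.comp_add_const x c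
  have heq : forwardMean e F = fun x ↦
      e⁻¹ * ((∫ y in 0..x + 2 * e, F y) - ∫ y in 0..x + e, F y) := funext fun x ↦ by
    rw [forwardMean_eq_inv_mul he,
      intervalIntegral.integral_interval_sub_left (hintegrable _ _) (hintegrable _ _)]
  rw [heq]
  exact (((hprim _).sub (hprim _)).const_mul e⁻¹).congr_deriv (by ring)

theorem forwardMean_eq_sub_div {x : ℝ} (hF' : Continuous F')
    (dF : ∀ y > x, HasDerivAt F (-F' y) y) (he : 0 < e) :
    forwardMean e F' x = (F (x + e) - F (x + 2 * e)) / e := by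
  have hFTC := intervalIntegral.integral_eq_sub_of_hasDerivAt (a := x + e) (b := x + 2 * e)
    (f := F) (f' := fun y ↦ -F' y) (fun y hy ↦ dF y ?_) (hF'.neg.intervalIntegrable _ _)
  · rw [intervalIntegral.integral_neg] at hFTC
    rw [forwardMean_eq_inv_mul he.ne', ← neg_neg (∫ y in _.._, F' y), hFTC]
    ring
  · rw [uIcc_of_le (by linarith)] at hy
    linarith [hy.1]

theorem hasDerivAt_forwardMean_of_hasDerivAt {a : ℝ} (hF : Continuous F) (hF' : Continuous F')
    (dF : ∀ x > a, HasDerivAt F (-F' x) x) (he : 0 < e) :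
    ∀ x > a, HasDerivAt (forwardMean e F) (-forwardMean e F' x) x := fun x hx ↦ by
  rw [forwardMean_eq_sub_div hF' (fun y hy ↦ dF y (hx.trans hy)) he]
  exact hasDerivAt_forwardMean hF he.ne' x

theorem two_mul_le_add_of_convexOn {s : Set ℝ} (hF : ConvexOn ℝ s F) {x h : ℝ} (hx : x ∈ s)
    (hxh : x + 2 * h ∈ s) : 2 * F (x + h) ≤ F x + F (x + 2 * h) := by
  have := hF.2 hx hxh (one_half_pos (α := ℝ)).le one_half_pos.le (add_halves 1)
  rw [show (1 / 2 : ℝ) • x + (1 / 2 : ℝ) • (x + 2 * h) = x + h by simp only [smul_eq_mul]; ring,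
    smul_eq_mul, smul_eq_mul] at this
  linarith

theorem multiplyMonotone_two_forwardMean {a : ℝ} (hF : Continuous F) (hanti : Antitone F)
    (hconv : ConvexOn ℝ (Ici a) F) (hnonneg : ∀ x, 0 ≤ F x) (he : 0 < e) :
    MultiplyMonotone 2 a (forwardMean e (forwardMean e F)) := by
  have hA : Continuous (forwardMean e F) := continuous_forwardMean hF
  have dA := hasDerivAt_forwardMean hF he.ne'
  refine ⟨fun x _ ↦ forwardMean_nonneg (fun y _ ↦ forwardMean_nonneg (fun z _ ↦ hnonneg z) he.le)
      he.le, _, fun x _ ↦ hasDerivAt_forwardMean hA he.ne' x, fun x _ ↦ ?_,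
    fun x ↦ (F (x + 2 * e) - 2 * F (x + 3 * e) + F (x + 4 * e)) / e ^ 2, fun x _ ↦ ?_, ?_,
    fun x hx ↦ ?_⟩
  · have := antitone_forwardMean hF hanti (e := e) (show x + e ≤ x + 2 * e by linarith)
    exact div_nonneg (sub_nonneg.2 this) he.le
  · refine ((((dA _).comp_add_const x e).sub ((dA _).comp_add_const x (2 * e))).div_const
      e).congr_deriv ?_
    ring_nf
  · fun_prop
  · have := two_mul_le_add_of_convexOn hconv (x := x + 2 * e) (h := e)
      (mem_Ici.2 (by linarith)) (mem_Ici.2 (by linarith))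
    rw [show x + 2 * e + e = x + 3 * e by ring, show x + 2 * e + 2 * e = x + 4 * e by ring] at this
    exact div_nonneg (by linarith) (by positivity)

end ForwardMean

section AlternatingDerivatives

open Filter Topology

theorem MultiplyMonotone.of_hasDerivAt {k n : ℕ} {a : ℝ} {F : ℕ → ℝ → ℝ}
    (dF : ∀ j < k, ∀ x > a, HasDerivAt (F j) (-F (j + 1) x) x)
    (hF : ∀ j < k, ∀ x > a, 0 ≤ F j x) (hFk : MultiplyMonotone n a (F k)) :
    MultiplyMonotone (n + k) a (F 0) := by
  induction k generalizing F with
  | zero => exact hFk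
  | succ k ih =>
    exact ⟨hF 0 k.succ_pos, F 1, dF 0 k.succ_pos, ih (F := fun j ↦ F (j + 1))
      (fun j hj ↦ dF (j + 1) (by lia)) (fun j hj ↦ hF (j + 1) (by lia)) hFk⟩

theorem nonneg_of_hasDerivAt_neg {F F' : ℝ → ℝ} {a b : ℝ} (hF : ContinuousOn F (Ici a))
    (dF : ∀ x > a, HasDerivAt F (-F' x) x) (hF' : ∀ x > a, 0 ≤ F' x) (hb : ∀ x ≥ b, F x = 0) :
    ∀ x ≥ a, 0 ≤ F x := fun x hx ↦ by
  have hanti : AntitoneOn F (Ici a) := antitoneOn_of_hasDerivWithinAt_nonpos (convex_Ici a) hF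
    (f' := fun x ↦ -F' x) (fun x hx ↦ (dF x (by simpa using hx)).hasDerivWithinAt)
    (fun x hx ↦ neg_nonpos.2 (hF' x (by simpa using hx)))
  rw [← hb (max x b) (le_max_right _ _)]
  exact hanti hx (hx.trans (le_max_left _ _)) (le_max_left _ _)

theorem multiplyMonotone_forwardMean_of_hasDerivAt {k : ℕ} {a b e : ℝ} {F : ℕ → ℝ → ℝ}
    (hF : ∀ j ≤ k, Continuous (F j)) (dF : ∀ j < k, ∀ x > a, HasDerivAt (F j) (-F (j + 1) x) x)
    (hconv : ConvexOn ℝ (Ici a) (F k)) (hanti : Antitone (F k)) (hb : ∀ j ≤ k, ∀ x ≥ b, F j x = 0)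
    (he : 0 < e) : MultiplyMonotone (k + 2) a (forwardMean e (forwardMean e (F 0))) := by
  have hFk : ∀ x, 0 ≤ F k x := fun x ↦
    (hb k le_rfl _ (le_max_right x b)).ge.trans (hanti (le_max_left x b))
  have hnonneg : ∀ j ≤ k, ∀ x ≥ a, 0 ≤ F j x := by
    intro j hj
    induction hj using Nat.decreasingInduction with
    | self => exact fun x _ ↦ hFk x
    | of_succ j hj ih =>
      exact nonneg_of_hasDerivAt_neg (hF j hj.le).continuousOn (dF j hj)
        (fun x hx ↦ ih x hx.le) (hb j hj.le)
  rw [add_comm]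
  refine MultiplyMonotone.of_hasDerivAt (F := fun j ↦ forwardMean e (forwardMean e (F j)))
    (fun j hj ↦ ?_) (fun j hj x hx ↦ ?_)
    (multiplyMonotone_two_forwardMean (hF k le_rfl) hanti hconv hFk he)
  · exact hasDerivAt_forwardMean_of_hasDerivAt (continuous_forwardMean (hF j hj.le))
      (continuous_forwardMean (hF (j + 1) hj))
      (hasDerivAt_forwardMean_of_hasDerivAt (hF j hj.le) (hF (j + 1) hj) (dF j hj) he) he
  · exact forwardMean_nonneg (fun y hy ↦ forwardMean_nonneg
      (fun z hz ↦ hnonneg j hj.le z (by linarith)) he.le) he.le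

theorem posDefOnSphere_of_hasDerivAt {k : ℕ} {F : ℕ → ℝ → ℝ} (hF : ∀ j ≤ k, Continuous (F j))
    (dF : ∀ j < k, ∀ x > 0, HasDerivAt (F j) (-F (j + 1) x) x)
    (hconv : ConvexOn ℝ (Ici 0) (F k)) (hanti : Antitone (F k))
    (hπ : ∀ j ≤ k, ∀ x ≥ π, F j x = 0) : PosDefOnSphere (2 * k + 2) (F 0) := by
  have hF0 := hF 0 k.zero_le
  refine .of_tendsto (l := 𝓝[>] 0) ?_ fun x _ ↦
    (tendsto_forwardMean_forwardMean hF0 x).mono_left nhdsWithin_le_nhds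
  filter_upwards [self_mem_nhdsWithin] with e (he : 0 < e)
  refine (multiplyMonotone_forwardMean_of_hasDerivAt hF dF hconv hanti hπ he).posDefOnSphere
    (continuous_forwardMean (continuous_forwardMean hF0)).continuousOn (sub_lt_self π he)
    fun x hx ↦ forwardMean_eq_zero (fun y hy ↦ ?_) he.le
  exact forwardMean_eq_zero (fun z hz ↦ hπ 0 k.zero_le z (by linarith)) he.le

end AlternatingDerivatives

section Extension

open Filter Topology

variable {a b : ℝ} {f f' : ℝ → ℝ}

theorem hasDerivAt_IccExtend (hab : a ≤ b)
    (df : ∀ x ∈ Icc a b, HasDerivWithinAt f (f' x) (Icc a b) x) (hb : f' b = 0) {x : ℝ}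
    (hx : a < x) :
    HasDerivAt (IccExtend hab fun x ↦ f x) (IccExtend hab (fun x ↦ f' x) x) x := by
  have hright : ∀ x ≥ b, HasDerivWithinAt (IccExtend hab fun x ↦ f x) 0 (Ici b) x := fun x hx ↦
    (hasDerivWithinAt_const x _ (f b)).congr (fun _ hy ↦ IccExtend_of_right_le hab _ hy)
      (IccExtend_of_right_le hab _ hx)
  have hleft : ∀ x ∈ Icc a b, HasDerivWithinAt (IccExtend hab fun x ↦ f x) (f' x) (Icc a b) x :=
    fun x hx ↦ (df x hx).congr (fun _ hy ↦ IccExtend_of_mem hab _ hy) (IccExtend_of_mem hab _ hx)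
  rcases lt_trichotomy x b with hxb | rfl | hxb
  · rw [IccExtend_of_mem hab _ ⟨hx.le, hxb.le⟩]
    exact (hleft x ⟨hx.le, hxb.le⟩).hasDerivAt (Icc_mem_nhds hx hxb)
  · have hunion := (hb ▸ hleft x ⟨hab, le_rfl⟩).union (hright x le_rfl)
    rw [Icc_union_Ici_eq_Ici hab] at hunion
    rw [IccExtend_right, hb]
    exact hunion.hasDerivAt (Ici_mem_nhds hx)
  · rw [IccExtend_of_right_le hab _ hxb.le, hb]
    exact (hright x hxb.le).hasDerivAt (Ici_mem_nhds hxb)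

theorem antitoneOn_Icc_of_convexOn (hf : ConvexOn ℝ (Icc a b) f) (hb : ∀ x ∈ Icc a b, f b ≤ f x) :
    AntitoneOn f (Icc a b) := fun x hx _ hy hxy ↦
  (hf.le_max_of_mem_Icc hx ⟨hy.1.trans hy.2, le_rfl⟩ ⟨hxy, hy.2⟩).trans_eq (max_eq_left (hb x hx))

theorem antitone_IccExtend (hab : a ≤ b) (hf : AntitoneOn f (Icc a b)) :
    Antitone (IccExtend hab fun x ↦ f x) := fun _ _ hxy ↦
  hf (Subtype.prop _) (Subtype.prop _) (monotone_projIcc hab hxy)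

theorem convexOn_Ici_IccExtend (hab : a ≤ b) (hf : ConvexOn ℝ (Icc a b) f)
    (hanti : AntitoneOn f (Icc a b)) : ConvexOn ℝ (Ici a) (IccExtend hab fun x ↦ f x) := by
  have himage : (fun x ↦ min x b) '' Ici a = Icc a b := Subset.antisymm
    (image_subset_iff.2 fun x hx ↦ ⟨le_min hx hab, min_le_right _ _⟩)
    fun y hy ↦ ⟨y, hy.1, min_eq_left hy.2⟩
  have hmin : ConcaveOn ℝ (Ici a) fun x ↦ min x b :=
    (concaveOn_id (convex_Ici a)).inf (concaveOn_const b (convex_Ici a))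
  refine (ConvexOn.comp_concaveOn (himage ▸ hf) hmin (himage ▸ hanti)).congr fun x hx ↦ ?_
  rw [IccExtend_apply]
  exact congrArg f ((min_comm x b).trans (max_eq_right (le_min hab hx)).symm)

theorem nonneg_of_convexOn_of_hasDerivWithinAt_zero (hf : ConvexOn ℝ (Icc a b) f) (hb : f b = 0)
    (df : HasDerivWithinAt f 0 (Icc a b) b) : ∀ x ∈ Icc a b, 0 ≤ f x := fun x hx ↦ by
  rcases hx.2.eq_or_lt with rfl | hxb
  · exact hb.ge
  · have hslope := hf.slope_le_of_hasDerivWithinAt hx ⟨hx.1.trans hx.2, le_rfl⟩ hxb df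
    rw [slope_def_field, hb, zero_sub, div_le_iff₀ (sub_pos.2 hxb), zero_mul] at hslope
    exact neg_nonpos.1 hslope

theorem hasDerivWithinAt_iteratedDerivWithin {n : ℕ} {s : Set ℝ} (hf : ContDiffOn ℝ n f s)
    (hs : UniqueDiffOn ℝ s) {j : ℕ} (hj : j < n) {x : ℝ} (hx : x ∈ s) :
    HasDerivWithinAt (iteratedDerivWithin j f s) (iteratedDerivWithin (j + 1) f s x) s x := by
  rw [iteratedDerivWithin_succ]
  exact (hf.differentiableOn_iteratedDerivWithin (mod_cast hj) hs x hx).hasDerivWithinAt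

end Extension

theorem polya_criterion_pos_def_general {d l : ℕ} (hd : d ≤ 2 * l + 2) {g : ℝ → ℝ}
    (hg : ContDiffOn ℝ l g (Icc 0 π))
    (hconvex : ConvexOn ℝ (Icc 0 π) fun θ ↦ (-1) ^ l * iteratedDerivWithin l g (Icc 0 π) θ)
    (hnonneg : ∀ θ ∈ Icc 0 π, 0 ≤ (-1) ^ l * iteratedDerivWithin l g (Icc 0 π) θ)
    (hvanish : ∀ j ≤ l, iteratedDerivWithin j g (Icc 0 π) π = 0) : PosDefOnSphere d g := by
  let f : ℕ → ℝ → ℝ := fun j θ ↦ (-1) ^ j * iteratedDerivWithin j g (Icc 0 π) θ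
  have huniq : UniqueDiffOn ℝ (Icc 0 π) := uniqueDiffOn_Icc pi_pos
  have hπ : ∀ j ≤ l, f j π = 0 := fun j hj ↦ mul_eq_zero_of_right _ (hvanish j hj)
  have df : ∀ j < l, ∀ θ ∈ Icc 0 π, HasDerivWithinAt (f j) (-f (j + 1) θ) (Icc 0 π) θ :=
    fun j hj θ hθ ↦ ((hasDerivWithinAt_iteratedDerivWithin hg huniq hj hθ).const_mul _).congr_deriv
      (by simp only [f]; ring)
  have hcont : ∀ j ≤ l, Continuous (IccExtend pi_pos.le fun θ ↦ f j θ) := fun j hj ↦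
    (continuousOn_const.mul (hg.continuousOn_iteratedDerivWithin (mod_cast hj)
      huniq)).domRestrict.Icc_extend'
  have hanti : AntitoneOn (f l) (Icc 0 π) :=
    antitoneOn_Icc_of_convexOn hconvex fun θ hθ ↦ (hπ l le_rfl).trans_le (hnonneg θ hθ)
  have hpos : PosDefOnSphere (2 * l + 2) (IccExtend pi_pos.le fun θ ↦ f 0 θ) :=
    posDefOnSphere_of_hasDerivAt (F := fun j ↦ IccExtend pi_pos.le fun θ ↦ f j θ)
      hcont (fun j hj θ hθ ↦ hasDerivAt_IccExtend pi_pos.le (df j hj)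
        (neg_eq_zero.2 (hπ _ hj)) hθ)
      (convexOn_Ici_IccExtend pi_pos.le hconvex hanti) (antitone_IccExtend pi_pos.le hanti)
      fun j hj θ hθ ↦ (IccExtend_of_right_le pi_pos.le _ hθ).trans (hπ j hj)
  refine (hpos.mono hd).congr fun θ hθ ↦ (IccExtend_of_mem pi_pos.le _ hθ).trans ?_
  simp only [f, pow_zero, one_mul, iteratedDerivWithin_zero]

theorem le_two_mul_add_two_of_eq_ceil {d l : ℕ} (hl : (l : ℤ) = ⌈((d : ℝ) - 2) / 2⌉) :
    d ≤ 2 * l + 2 := by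
  have hle : ((d : ℝ) - 2) / 2 ≤ (l : ℤ) := hl ▸ Int.le_ceil _
  have : (d : ℝ) ≤ 2 * l + 2 := by
    rw [Int.cast_natCast] at hle
    linarith
  exact_mod_cast this

theorem polya_criterion_pos_def (d : ℕ) (hd : 3 ≤ d) (lam : ℕ)
    (hlam : (lam : ℤ) = ⌈((d : ℝ) - 2) / 2⌉) (g : ℝ → ℝ)
    (hg : ContDiffOn ℝ lam g (Set.Icc 0 π))
    (hconvex : ConvexOn ℝ (Set.Icc 0 π)
      (fun θ => (-1 : ℝ) ^ lam * iteratedDerivWithin lam g (Set.Icc 0 π) θ))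
    (hvanish : ∀ j ≤ lam, iteratedDerivWithin j g (Set.Icc 0 π) π = 0)
    (hleft : HasDerivWithinAt (iteratedDerivWithin lam g (Set.Icc 0 π)) 0 (Set.Icc 0 π) π)
    (hright : ∃ L : ℝ,
      HasDerivWithinAt (iteratedDerivWithin lam g (Set.Icc 0 π)) L (Set.Icc 0 π) 0) :
    PosDefOnSphere d g :=
  polya_criterion_pos_def_general (le_two_mul_add_two_of_eq_ceil hlam) hg hconvex
    (nonneg_of_convexOn_of_hasDerivWithinAt_zero hconvex (by rw [hvanish lam le_rfl, mul_zero])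
      (by simpa using hleft.const_mul ((-1) ^ lam)))
    hvanish
end
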